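/- arXiv:1410.0068 — 2 statements merged into one kernel-verified Lean document; each statement's English description precedes it below -/
import Mathlib

section
/- Fix integers ℓ ≥ 0 and n ≥ ℓ+1 and a constant Z > 0. There exist constants C, δ > 0 such that for all h, R > 0 with h²/R < δ: |E_n(R) + Z²/(4n²h²) − T(h,R)| ≤ C·(h²/R)·T(h,R), where T(h,R) = [2^{2n+1}·h^{−4n−2}·R^{2n}/(n^{2n+3}·(n−ℓ−1)!·(n+ℓ)!)]·(Z/2)^{2n+2}·e^{−ZR/(n h²)}. -/
open MeasureTheory Set Filter

/-- `E` is a negative eigenvalue of the confined Coulomb Hamiltonian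
`H_R(ℓ;h) = h²D_y² + h²ℓ(ℓ+1)y⁻² − Z y⁻¹` on `(0,R)` with Dirichlet conditions:
some nonzero `u ∈ C²((0,R])` solves the eigenvalue equation on `(0,R)` with
`u → 0` at `0⁺` and `u(R) = 0`. -/
def IsEigCoulombConfined (Z : ℝ) (ℓ : ℕ) (h R E : ℝ) : Prop :=
  E < 0 ∧
  ∃ u : ℝ → ℝ, (∃ x ∈ Set.Ioc 0 R, u x ≠ 0) ∧ ContDiffOn ℝ 2 u (Set.Ioc 0 R) ∧
    Filter.Tendsto u (nhdsWithin 0 (Set.Ioi 0)) (nhds 0) ∧ u R = 0 ∧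
    ∀ x ∈ Set.Ioo 0 R,
      -(h ^ 2) * deriv (deriv u) x + h ^ 2 * ((ℓ : ℝ) * (ℓ + 1)) * (x ^ 2)⁻¹ * u x
        - Z * x⁻¹ * u x = E * u x

/-- `lam` is the `m`-th element of `S` in increasing order (counting from `m = 0`). -/
def IsNthEig (S : Set ℝ) (m : ℕ) (lam : ℝ) : Prop :=
  lam ∈ S ∧ {x ∈ S | x < lam}.Finite ∧ {x ∈ S | x < lam}.ncard = m


/-- Exponential generating function of a sequence. -/
noncomputable def egf (c : ℕ → ℝ) (z : ℝ) : ℝ := ∑' k, c k * (z ^ k / (k.factorial : ℝ))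

lemma egf_summable {c : ℕ → ℝ} {A : ℝ} (hc : ∀ k, |c k| ≤ A ^ k) (z : ℝ) :
    Summable (fun k => c k * (z ^ k / (k.factorial : ℝ))) := by
  refine Summable.of_norm_bounded (Real.summable_pow_div_factorial (A * |z|)) ?_
  intro k
  rw [Real.norm_eq_abs, abs_mul, abs_div, abs_pow, Nat.abs_cast, mul_pow, mul_div_assoc]
  gcongr
  exact hc k

lemma egf_hasDerivAt {c : ℕ → ℝ} {A : ℝ} (hc : ∀ k, |c k| ≤ A ^ k) (z : ℝ) :
    HasDerivAt (egf c) (egf (fun k => c (k + 1)) z) z := by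
  have hA : 0 ≤ A := by have := hc 1; rw [pow_one] at this; exact (abs_nonneg _).trans this
  set ρ := |z| + 1 with hρ
  have hρ0 : 0 ≤ ρ := by positivity
  have h1 : Summable (fun k : ℕ => |c k| * (k * ρ ^ (k - 1) / (k.factorial : ℝ))) := by
    rw [← summable_nat_add_iff 1]
    refine Summable.of_nonneg_of_le (fun k => by positivity) (fun k => ?_)
      ((Real.summable_pow_div_factorial (A * ρ)).mul_left A)
    rw [Nat.factorial_succ, mul_pow]
    have e : ((k + 1 : ℕ) : ℝ) * ρ ^ (k + 1 - 1) / (((k + 1) * k.factorial : ℕ) : ℝ)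
        = ρ ^ k / (k.factorial : ℝ) := by
      push_cast
      field_simp
    rw [e]
    calc |c (k + 1)| * (ρ ^ k / (k.factorial : ℝ)) ≤ A ^ (k + 1) * (ρ ^ k / (k.factorial : ℝ)) := by
          gcongr; exact hc _
      _ = A * (A ^ k * ρ ^ k / (k.factorial : ℝ)) := by ring
  have h2 := hasDerivAt_tsum_of_isPreconnected (𝕜 := ℝ) (F := ℝ)
    (g := fun k z => c k * (z ^ k / (k.factorial : ℝ)))
    (g' := fun k z => c k * (k * z ^ (k - 1) / (k.factorial : ℝ)))
    (t := Metric.ball 0 ρ) (y₀ := 0) (y := z) h1 Metric.isOpen_ball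
    (convex_ball 0 ρ).isPreconnected
    (fun k y _ => ((hasDerivAt_pow k y).div_const _).const_mul _)
    (fun k y hy => by
      have hy' : |y| ≤ ρ := by
        have := Metric.mem_ball.1 hy; rw [dist_zero_right] at this; exact this.le
      rw [Real.norm_eq_abs, abs_mul, abs_div, abs_mul, abs_pow, Nat.abs_cast, Nat.abs_cast]
      gcongr)
    (Metric.mem_ball_self (by positivity)) (egf_summable hc 0)
    (by rw [Metric.mem_ball, dist_zero_right, Real.norm_eq_abs]; linarith)
  have h3 : ∑' k : ℕ, c k * (k * z ^ (k - 1) / (k.factorial : ℝ)) = egf (fun k => c (k + 1)) z := by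
    rw [egf, tsum_eq_zero_add']
    · simp only [CharP.cast_eq_zero, zero_mul, zero_div, mul_zero, zero_add]
      congr 1; ext k
      rw [Nat.factorial_succ]
      push_cast
      field_simp
    · have : Summable (fun k => c (k+1) * (z ^ k / (k.factorial : ℝ))) := by
        refine Summable.of_norm_bounded ((Real.summable_pow_div_factorial (A * |z|)).mul_left A) ?_
        intro k
        rw [Real.norm_eq_abs, abs_mul, abs_div, abs_pow, Nat.abs_cast, mul_pow, mul_div_assoc,
          ← mul_assoc, ← pow_succ']
        gcongr
        exact hc _
      convert this using 2 with k
      rw [Nat.factorial_succ]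
      push_cast
      field_simp
  rw [← h3]
  exact h2

/-- Coefficients of Kummer function. -/
noncomputable def kc (a : ℝ) (b : ℕ) (k : ℕ) : ℝ := ∏ j ∈ Finset.range k, (a + j) / ((b : ℝ) + j)

lemma kc_succ (a : ℝ) (b k : ℕ) : kc a b (k + 1) = kc a b k * ((a + k) / ((b : ℝ) + k)) := by
  rw [kc, Finset.prod_range_succ, ← kc]

lemma kc_zero (a : ℝ) (b : ℕ) : kc a b 0 = 1 := by simp [kc]

lemma kc_bound (a : ℝ) {b : ℕ} (hb : 1 ≤ b) (k : ℕ) : |kc a b k| ≤ (|a| + 1) ^ k := by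
  induction k with
  | zero => simp [kc]
  | succ k ih =>
    rw [kc_succ, abs_mul, pow_succ]
    have hb' : (1 : ℝ) ≤ b := by exact_mod_cast hb
    have : |(a + k) / ((b : ℝ) + k)| ≤ |a| + 1 := by
      rw [abs_div, abs_of_pos (show (0:ℝ) < b + k by positivity), div_le_iff₀ (by positivity)]
      have h1 : |a + k| ≤ |a| + k := by
        have := abs_add_le a k; rwa [Nat.abs_cast] at this
      have h2 : 0 ≤ |a| := abs_nonneg a
      have h3 : (0:ℝ) ≤ k := by positivity
      nlinarith
    gcongr

/-- Kummer function `M(a,b,z)`. -/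
noncomputable def kM (a : ℝ) (b : ℕ) (z : ℝ) : ℝ := egf (kc a b) z

noncomputable def kM1 (a : ℝ) (b : ℕ) (z : ℝ) : ℝ := egf (fun k => kc a b (k + 1)) z

noncomputable def kM2 (a : ℝ) (b : ℕ) (z : ℝ) : ℝ := egf (fun k => kc a b (k + 2)) z

lemma kM_zero (a : ℝ) (b : ℕ) : kM a b 0 = 1 := by
  rw [kM, egf, tsum_eq_single 0]
  · simp [kc]
  · intro k hk; simp [hk]

lemma kM_hasDerivAt (a : ℝ) {b : ℕ} (hb : 1 ≤ b) (z : ℝ) : HasDerivAt (kM a b) (kM1 a b z) z :=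
  egf_hasDerivAt (kc_bound a hb) z

lemma egf_smul (c : ℕ → ℝ) (t z : ℝ) : egf (fun k => t * c k) z = t * egf c z := by
  simp only [egf, mul_assoc]
  exact tsum_mul_left

/-- shifted bound, general constants -/
lemma egf_hasDerivAt' {c : ℕ → ℝ} {K A : ℝ} (hK : 0 < K) (hc : ∀ k, |c k| ≤ K * A ^ k) (z : ℝ) :
    HasDerivAt (egf c) (egf (fun k => c (k + 1)) z) z := by
  have h := egf_hasDerivAt (c := fun k => K⁻¹ * c k) (A := A) (fun k => by
    rw [abs_mul, abs_of_pos (inv_pos.2 hK), inv_mul_le_iff₀ hK]; exact hc k) z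
  have h' := h.const_mul K
  rw [egf_smul] at h'
  have e : (fun y => K * egf (fun k => K⁻¹ * c k) y) = egf c := by
    ext y; rw [egf_smul, mul_inv_cancel_left₀ hK.ne']
  rwa [e, mul_inv_cancel_left₀ hK.ne'] at h'

lemma egf_summable' {c : ℕ → ℝ} {K A : ℝ} (hc : ∀ k, |c k| ≤ K * A ^ k) (z : ℝ) :
    Summable (fun k => c k * (z ^ k / (k.factorial : ℝ))) := by
  refine Summable.of_norm_bounded ((Real.summable_pow_div_factorial (A * |z|)).mul_left K) ?_
  intro k
  rw [Real.norm_eq_abs, abs_mul, abs_div, abs_pow, Nat.abs_cast, mul_pow, mul_div_assoc, ← mul_assoc]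
  gcongr
  exact hc k

lemma kc1_bound (a : ℝ) {b : ℕ} (hb : 1 ≤ b) (k : ℕ) :
    |kc a b (k + 1)| ≤ (|a| + 1) * (|a| + 1) ^ k := by
  have := kc_bound a hb (k+1); rwa [pow_succ'] at this

lemma kc2_bound (a : ℝ) {b : ℕ} (hb : 1 ≤ b) (k : ℕ) :
    |kc a b (k + 2)| ≤ (|a| + 1) ^ 2 * (|a| + 1) ^ k := by
  have := kc_bound a hb (k+2); rwa [add_comm, pow_add, add_comm 2 k] at this

lemma kM1_hasDerivAt (a : ℝ) {b : ℕ} (hb : 1 ≤ b) (z : ℝ) :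
    HasDerivAt (kM1 a b) (kM2 a b z) z :=
  egf_hasDerivAt' (K := |a| + 1) (by positivity) (kc1_bound a hb) z

/-- z times an egf -/
lemma egf_z_mul {c : ℕ → ℝ} {K A : ℝ} (hc : ∀ k, |c k| ≤ K * A ^ k) (z : ℝ) :
    HasSum (fun k : ℕ => (k * c (k - 1)) * (z ^ k / (k.factorial : ℝ))) (z * egf c z) := by
  have h := ((egf_summable' hc z).hasSum).mul_left z
  rw [← egf] at h
  rw [← hasSum_nat_add_iff' 1]
  simp only [Finset.range_one, Finset.sum_singleton, CharP.cast_eq_zero, zero_mul, sub_zero]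
  refine h.congr_fun ?_
  intro k
  rw [Nat.factorial_succ]
  push_cast
  field_simp
  ring_nf

lemma kummer_ode (a : ℝ) {b : ℕ} (hb : 1 ≤ b) (z : ℝ) :
    z * kM2 a b z + (b - z) * kM1 a b z - a * kM a b z = 0 := by
  have h0 := ((egf_summable (kc_bound a hb) z).hasSum).mul_left a
  have h1 := ((egf_summable' (kc1_bound a hb) z).hasSum).mul_left (b : ℝ)
  have h2 := egf_z_mul (kc2_bound a hb) z
  have h3 := egf_z_mul (kc1_bound a hb) z
  have h := ((h2.add h1).sub h3).sub h0
  have e : z * kM2 a b z + (b - z) * kM1 a b z - a * kM a b z =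
    z * egf (fun k => kc a b (k + 2)) z + b * ∑' k, kc a b (k + 1) * (z ^ k / (k.factorial : ℝ))
      - z * egf (fun k => kc a b (k + 1)) z - a * ∑' k, kc a b k * (z ^ k / (k.factorial : ℝ)) := by
    rw [kM2, kM1, kM]
    simp only [egf]
    ring
  rw [e]
  refine h.unique ?_
  convert hasSum_zero using 2 with k
  have hb' : (1 : ℝ) ≤ b := by exact_mod_cast hb
  have key : ((b : ℝ) + k) * kc a b (k + 1) = (a + k) * kc a b k := by
    rw [kc_succ]
    have : (b : ℝ) + k ≠ 0 := by positivity
    field_simp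
  rcases k with _ | k
  · simp only [CharP.cast_eq_zero, add_zero] at key
    simp only [CharP.cast_eq_zero, zero_add]
    linear_combination key * (z ^ 0 / (Nat.factorial 0 : ℝ))
  · have e1 : k + 1 - 1 = k := rfl
    rw [e1]
    push_cast at key ⊢
    linear_combination key * (z ^ (k+1) / (Nat.factorial (k+1) : ℝ))

/-- Regular solution of the radial equation. -/
noncomputable def phi (ℓ : ℕ) (a κ y : ℝ) : ℝ :=
  y ^ (ℓ + 1) * Real.exp (-κ * y) * kM a (2 * ℓ + 2) (2 * κ * y)

noncomputable def phi1 (ℓ : ℕ) (a κ y : ℝ) : ℝ :=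
  (((ℓ + 1 : ℕ) : ℝ) * y ^ ℓ * Real.exp (-κ * y) + y ^ (ℓ + 1) * (Real.exp (-κ * y) * (-κ)))
      * kM a (2 * ℓ + 2) (2 * κ * y)
    + y ^ (ℓ + 1) * Real.exp (-κ * y) * (kM1 a (2 * ℓ + 2) (2 * κ * y) * (2 * κ))

lemma hasDerivAt_expk (κ y : ℝ) :
    HasDerivAt (fun y => Real.exp (-κ * y)) (Real.exp (-κ * y) * (-κ)) y := by
  have := ((hasDerivAt_id y).const_mul (-κ)).exp
  simpa using this

lemma hasDerivAt_kMk (a κ y : ℝ) (ℓ : ℕ) :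
    HasDerivAt (fun y => kM a (2 * ℓ + 2) (2 * κ * y)) (kM1 a (2 * ℓ + 2) (2 * κ * y) * (2 * κ)) y := by
  have h1 := kM_hasDerivAt a (b := 2 * ℓ + 2) (by omega) (2 * κ * y)
  have h2 := (hasDerivAt_id y).const_mul (2 * κ)
  have := h1.comp y h2
  simpa [Function.comp_def] using this

lemma hasDerivAt_kM1k (a κ y : ℝ) (ℓ : ℕ) :
    HasDerivAt (fun y => kM1 a (2 * ℓ + 2) (2 * κ * y)) (kM2 a (2 * ℓ + 2) (2 * κ * y) * (2 * κ)) y := by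
  have h1 := kM1_hasDerivAt a (b := 2 * ℓ + 2) (by omega) (2 * κ * y)
  have h2 := (hasDerivAt_id y).const_mul (2 * κ)
  have := h1.comp y h2
  simpa [Function.comp_def] using this

lemma phi_hasDerivAt (ℓ : ℕ) (a κ y : ℝ) : HasDerivAt (phi ℓ a κ) (phi1 ℓ a κ y) y :=
  ((hasDerivAt_pow (ℓ + 1) y).mul (hasDerivAt_expk κ y)).mul (hasDerivAt_kMk a κ y ℓ)

lemma phi1_hasDerivAt (ℓ : ℕ) (a κ ν y : ℝ) (hy : y ≠ 0) (ha : a = ℓ + 1 - ν) :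
    HasDerivAt (phi1 ℓ a κ)
      ((ℓ * (ℓ + 1) * (y ^ 2)⁻¹ - 2 * κ * ν * y⁻¹ + κ ^ 2) * phi ℓ a κ y) y := by
  have hE := hasDerivAt_expk κ y
  have hM := hasDerivAt_kMk a κ y ℓ
  have hM1 := hasDerivAt_kM1k a κ y ℓ
  have hp := hasDerivAt_pow (ℓ + 1) y
  have hp' := hasDerivAt_pow ℓ y
  have h := ((((hp'.const_mul ((ℓ + 1 : ℕ) : ℝ)).mul hE).add (hp.mul (hE.mul_const (-κ)))).mul hM).add
    ((hp.mul hE).mul (hM1.mul_const (2 * κ)))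
  have key := kummer_ode a (b := 2 * ℓ + 2) (by omega) (2 * κ * y)
  have el : (ℓ : ℝ) * y ^ (ℓ - 1) = ℓ * y ^ ℓ * y⁻¹ := by
    rcases ℓ with _ | l
    · simp
    · rw [Nat.add_sub_cancel, pow_succ]; field_simp
  refine h.congr_deriv ?_
  simp only [Pi.mul_apply, Pi.add_apply, Nat.add_sub_cancel]
  rw [el, phi, ha] at *
  push_cast at key ⊢
  rw [pow_succ]
  field_simp
  ring_nf at key ⊢
  linear_combination (2 * κ * y) * key

lemma wronsk_nonpos {u u' f f' : ℝ → ℝ} {R w δ K : ℝ} (hR : 0 < R)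
    (hu : ∀ x ∈ Ioo 0 R, HasDerivAt u (u' x) x)
    (hu0 : Tendsto u (nhdsWithin 0 (Ioi 0)) (nhds 0))
    (hδ : 0 < δ) (hK : 0 < K) (hf : ∀ y ∈ Ioo 0 δ, 0 < f y ∧ f y ≤ K * y)
    (hf' : ContinuousAt f' 0) (hW : ∀ x ∈ Ioo 0 R, u x * f' x - u' x * f x = w) : w ≤ 0 := by
  by_contra hw
  push Not at hw
  have h1 : Tendsto (fun x => u x * f' x) (nhdsWithin 0 (Ioi 0)) (nhds 0) := by
    have := hu0.mul (hf'.tendsto.mono_left (nhdsWithin_le_nhds (s := Ioi 0)))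
    simpa using this
  have h2 : ∀ᶠ x in nhdsWithin 0 (Ioi 0), u x * f' x < w / 2 :=
    h1.eventually_lt_const (by linarith)
  have h3 : ∀ᶠ x in nhdsWithin (0:ℝ) (Ioi 0), x < min R δ :=
    (eventually_lt_nhds (show (0:ℝ) < min R δ by positivity)).filter_mono nhdsWithin_le_nhds
  obtain ⟨ε, hε, hε'⟩ := mem_nhdsGT_iff_exists_Ioo_subset.1 (h2.and h3)
  simp only [mem_Ioi] at hε
  have hd : ∀ x ∈ Ioo 0 ε, HasDerivAt (fun y => u y + w / (2 * K) * Real.log y)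
      (u' x + w / (2 * K) * x⁻¹) x ∧ u' x + w / (2 * K) * x⁻¹ ≤ 0 := by
    intro x hx
    obtain ⟨ha, hb⟩ := hε' hx
    have hxR : x ∈ Ioo 0 R := ⟨hx.1, hb.trans_le (min_le_left _ _)⟩
    have hxd : x ∈ Ioo 0 δ := ⟨hx.1, hb.trans_le (min_le_right _ _)⟩
    refine ⟨(hu x hxR).add ((Real.hasDerivAt_log hx.1.ne').const_mul _), ?_⟩
    have hw' := hW x hxR
    obtain ⟨hf1, hf2⟩ := hf x hxd
    have hx0 := hx.1
    have h5 : u' x * f x ≤ -(w / 2) := by linarith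
    have h6 : u' x < 0 := by
      by_contra hc; push Not at hc
      have := mul_nonneg hc hf1.le
      linarith
    have h7 : u' x * (K * x) ≤ -(w / 2) := by nlinarith
    have : u' x + w / (2 * K) * x⁻¹ = (u' x * (K * x) + w / 2) / (K * x) := by field_simp
    rw [this]
    apply div_nonpos_of_nonpos_of_nonneg _ (by positivity)
    linarith
  have hanti : AntitoneOn (fun y => u y + w / (2 * K) * Real.log y) (Ioo 0 ε) := by
    apply antitoneOn_of_deriv_nonpos (convex_Ioo _ _)
    · intro x hx; exact (hd x hx).1.continuousAt.continuousWithinAt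
    · intro x hx; rw [interior_Ioo] at hx; exact (hd x hx).1.differentiableAt.differentiableWithinAt
    · intro x hx; rw [interior_Ioo] at hx; rw [(hd x hx).1.deriv]; exact (hd x hx).2
  have hlim : Tendsto (fun y => u y + w / (2 * K) * Real.log y) (nhdsWithin 0 (Ioi 0)) atBot := by
    apply hu0.add_atBot
    exact Real.tendsto_log_nhdsGT_zero.const_mul_atBot (by positivity)
  have hm : ε / 2 ∈ Ioo 0 ε := ⟨by linarith, by linarith⟩
  have h8 := hlim.eventually_lt_atBot (u (ε/2) + w / (2 * K) * Real.log (ε/2))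
  have h9 : ∀ᶠ x in nhdsWithin (0:ℝ) (Ioi 0), x ∈ Ioo 0 (ε / 2) := Ioo_mem_nhdsGT hm.1
  obtain ⟨x, hx1, hx2⟩ := (h8.and h9).exists
  have := hanti (a := x) (b := ε/2) ⟨hx2.1, hx2.2.trans hm.2⟩ hm hx2.2.le
  simp only at this
  linarith

lemma eig_forces_zero {u u' f f' q : ℝ → ℝ} {R δ K : ℝ} (hR : 0 < R)
    (hu : ∀ x ∈ Ioo 0 R, HasDerivAt u (u' x) x)
    (hu' : ∀ x ∈ Ioo 0 R, HasDerivAt u' (q x * u x) x)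
    (hq : ContinuousOn q (Ioi 0))
    (hu0 : Tendsto u (nhdsWithin 0 (Ioi 0)) (nhds 0))
    (huR : u R = 0) (huc : ContinuousOn u (Ioc 0 R)) (hne : ∃ x ∈ Ioc 0 R, u x ≠ 0)
    (hδ : 0 < δ) (hK : 0 < K) (hf : ∀ y ∈ Ioo 0 δ, 0 < f y ∧ f y ≤ K * y)
    (hf' : ContinuousAt f' 0)
    (hfd : ∀ x, 0 < x → HasDerivAt f (f' x) x)
    (hfd' : ∀ x, 0 < x → HasDerivAt f' (q x * f x) x) : f R = 0 := by
  have hmid : R / 2 ∈ Ioo 0 R := ⟨by linarith, by linarith⟩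
  obtain ⟨w, hW⟩ : ∃ w, ∀ x ∈ Ioo 0 R, u x * f' x - u' x * f x = w := by
    have hWd : ∀ x ∈ Ioo 0 R, HasDerivAt (fun x => u x * f' x - u' x * f x) 0 x := by
      intro x hx
      have := ((hu x hx).mul (hfd' x hx.1)).sub ((hu' x hx).mul (hfd x hx.1))
      refine this.congr_deriv ?_
      ring
    refine ⟨u (R/2) * f' (R/2) - u' (R/2) * f (R/2), fun x hx => ?_⟩
    exact isOpen_Ioo.is_const_of_deriv_eq_zero (convex_Ioo (0:ℝ) R).isPreconnected
      (fun y hy => (hWd y hy).differentiableAt.differentiableWithinAt)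
      (fun y hy => (hWd y hy).deriv) hx hmid
  have hw1 := wronsk_nonpos hR hu hu0 hδ hK hf hf' hW
  have hw2 := wronsk_nonpos (u := fun x => - u x) (u' := fun x => - u' x) (w := -w) hR
    (fun x hx => (hu x hx).neg) (by simpa using hu0.neg) hδ hK hf hf'
    (fun x hx => by rw [← hW x hx]; ring)
  have hw : w = 0 := by linarith
  by_contra hfR
  have hfc : ContinuousAt f R := (hfd R hR).continuousAt
  have hev : ∀ᶠ x in nhds R, f x ≠ 0 ∧ 0 < x := (hfc.eventually_ne hfR).and (lt_mem_nhds hR)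
  obtain ⟨r, hr, hrs⟩ := Metric.eventually_nhds_iff_ball.1 hev
  have hsub : ∀ x ∈ Ioo (R - r) R, f x ≠ 0 ∧ x ∈ Ioo 0 R := by
    intro x hx
    have := hrs x (by rw [Metric.mem_ball, Real.dist_eq, abs_lt]; constructor <;> linarith [hx.1, hx.2])
    exact ⟨this.1, this.2, hx.2⟩
  have hqd : ∀ x ∈ Ioo (R - r) R, HasDerivAt (fun x => u x / f x) 0 x := by
    intro x hx
    obtain ⟨h1, h2⟩ := hsub x hx
    refine ((hu x h2).div (hfd x h2.1) h1).congr_deriv ?_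
    have := hW x h2
    rw [hw] at this
    rw [div_eq_zero_iff]; left; linarith
  have hlim : Tendsto (fun x => u x / f x) (nhdsWithin R (Iio R)) (nhds 0) := by
    have h1 : Tendsto u (nhdsWithin R (Iio R)) (nhds 0) := by
      have := huc R ⟨hR, le_rfl⟩
      rw [ContinuousWithinAt, huR] at this
      refine this.mono_left ?_
      rw [← nhdsWithin_Ioo_eq_nhdsLT hR]
      exact nhdsWithin_mono _ Ioo_subset_Ioc_self
    have := h1.div (hfc.tendsto.mono_left (nhdsWithin_le_nhds (s := Iio R))) hfR
    rw [zero_div] at this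
    exact this
  have hz : ∀ x ∈ Ioo (R - r) R, u x = 0 := by
    intro x hx
    have hc : ∀ y ∈ Ioo (R - r) R, u y / f y = u x / f x := fun y hy =>
      isOpen_Ioo.is_const_of_deriv_eq_zero (convex_Ioo (R - r) R).isPreconnected
      (fun y hy => (hqd y hy).differentiableAt.differentiableWithinAt)
      (fun y hy => (hqd y hy).deriv) hy hx
    have h2 : Tendsto (fun y => u y / f y) (nhdsWithin R (Iio R)) (nhds (u x / f x)) := by
      refine tendsto_const_nhds.congr' ?_
      filter_upwards [Ioo_mem_nhdsLT (show R - r < R by linarith)] with y hy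
      exact (hc y hy).symm
    have h3 := tendsto_nhds_unique h2 hlim
    rcases div_eq_zero_iff.1 h3 with h | h
    · exact h
    · exact absurd h (hsub x hx).1
  obtain ⟨x, hx, hux⟩ := hne
  have hxR : x < R := lt_of_le_of_ne hx.2 (fun h => hux (h ▸ huR))
  set t := R - r / 2 with ht
  have htm : t ∈ Ioo (R - r) R := ⟨by linarith, by linarith⟩
  have ht0 := (hsub t htm).2
  have hut : u t = 0 := hz t htm
  have hut' : u' t = 0 := by
    have h1 := hu t ht0
    have h2 : HasDerivAt u 0 t := by
      refine (hasDerivAt_const t (0:ℝ)).congr_of_eventuallyEq ?_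
      filter_upwards [isOpen_Ioo.mem_nhds htm] with y hy
      exact hz y hy
    exact h1.unique h2
  set a := min x t / 2 with ha
  have hmin : 0 < min x t := lt_min hx.1 ht0.1
  have ha0 : 0 < a := by positivity
  have hax : a < x := by have := min_le_left x t; linarith
  have hat : a < t := by have := min_le_right x t; linarith
  obtain ⟨C, hC⟩ := (isCompact_Icc (a := a) (b := R)).exists_bound_of_continuousOn
    (hq.mono (fun y hy => ha0.trans_le hy.1))
  have hC0 : 0 ≤ C := (norm_nonneg _).trans (hC t ⟨hat.le, htm.2.le⟩)
  have huniq := ODE_solution_unique_of_mem_Ioo (E := ℝ × ℝ) (v := fun s p => (p.2, q s * p.1))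
    (s := fun _ => univ) (K := ⟨max 1 C, by positivity⟩) (f := fun s => (u s, u' s))
    (g := fun _ => (0, 0)) (a := a) (b := R) (t₀ := t) ?_ ⟨hat, htm.2⟩ ?_ ?_ (by simp [hut, hut'])
  · have := huniq ⟨hax, hxR⟩
    simp only [Prod.mk.injEq] at this
    exact hux this.1
  · intro s hs
    apply LipschitzOnWith.of_dist_le_mul
    intro p _ p' _
    rw [Prod.dist_eq, Prod.dist_eq]
    have h1 : dist p.1 p'.1 ≤ max (dist p.1 p'.1) (dist p.2 p'.2) := le_max_left _ _
    have h2 : dist p.2 p'.2 ≤ max (dist p.1 p'.1) (dist p.2 p'.2) := le_max_right _ _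
    have h3 : (0:ℝ) ≤ max (dist p.1 p'.1) (dist p.2 p'.2) := dist_nonneg.trans h1
    apply max_le
    · calc dist p.2 p'.2 ≤ 1 * max (dist p.1 p'.1) (dist p.2 p'.2) := by linarith
        _ ≤ _ := by gcongr; exact le_max_left _ _
    · have : dist (q s * p.1) (q s * p'.1) = |q s| * dist p.1 p'.1 := by
        rw [Real.dist_eq, Real.dist_eq, ← mul_sub, abs_mul]
      rw [this]
      have h4 := hC s ⟨hs.1.le, hs.2.le⟩
      rw [Real.norm_eq_abs] at h4
      have h5 := h4.trans (le_max_right 1 C)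
      calc |q s| * dist p.1 p'.1 ≤ max 1 C * max (dist p.1 p'.1) (dist p.2 p'.2) := by gcongr
        _ = _ := rfl
  · intro s hs
    have hs' : s ∈ Ioo 0 R := ⟨ha0.trans hs.1, hs.2⟩
    exact ⟨(hu s hs').prodMk (hu' s hs'), mem_univ _⟩
  · intro s hs
    refine ⟨?_, mem_univ _⟩
    exact (hasDerivAt_const s ((0:ℝ), (0:ℝ))).congr_deriv (by simp; rfl)

lemma kM_continuous (a : ℝ) (ℓ : ℕ) : Continuous (kM a (2 * ℓ + 2)) :=
  continuous_iff_continuousAt.2 fun z => (kM_hasDerivAt a (by omega) z).continuousAt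

lemma kM1_continuous (a : ℝ) (ℓ : ℕ) : Continuous (kM1 a (2 * ℓ + 2)) :=
  continuous_iff_continuousAt.2 fun z => (kM1_hasDerivAt a (by omega) z).continuousAt

lemma phi1_continuous (ℓ : ℕ) (a κ : ℝ) : Continuous (phi1 ℓ a κ) := by
  have h1 := (kM_continuous a ℓ).comp (continuous_const.mul continuous_id : Continuous fun y : ℝ => 2 * κ * y)
  have h2 := (kM1_continuous a ℓ).comp (continuous_const.mul continuous_id : Continuous fun y : ℝ => 2 * κ * y)
  simp only [Function.comp_def] at h1 h2
  unfold phi1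
  fun_prop

lemma phi_near_zero (ℓ : ℕ) (a κ : ℝ) :
    ∃ δ K : ℝ, 0 < δ ∧ 0 < K ∧ ∀ y ∈ Ioo 0 δ, 0 < phi ℓ a κ y ∧ phi ℓ a κ y ≤ K * y := by
  have h1 := (kM_continuous a ℓ).comp (continuous_const.mul continuous_id : Continuous fun y : ℝ => 2 * κ * y)
  simp only [Function.comp_def] at h1
  have hpos : ∀ᶠ y in nhds (0:ℝ), 0 < kM a (2 * ℓ + 2) (2 * κ * y) := by
    apply h1.continuousAt.eventually_const_lt (u := 0)
    simp [kM_zero]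
  have hc : Continuous (fun y : ℝ => y ^ ℓ * Real.exp (-κ * y) * kM a (2 * ℓ + 2) (2 * κ * y)) := by
    fun_prop
  set g := fun y : ℝ => y ^ ℓ * Real.exp (-κ * y) * kM a (2 * ℓ + 2) (2 * κ * y) with hg
  have hK : ∀ᶠ y in nhds (0:ℝ), g y < |g 0| + 1 :=
    hc.continuousAt.eventually_lt_const (by linarith [le_abs_self (g 0)])
  obtain ⟨r, hr, hrs⟩ := Metric.eventually_nhds_iff_ball.1 (hpos.and hK)
  refine ⟨r, |g 0| + 1, hr, by positivity, fun y hy => ?_⟩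
  have hb : y ∈ Metric.ball (0:ℝ) r := by
    rw [Metric.mem_ball, dist_zero_right, Real.norm_eq_abs, abs_of_pos hy.1]; exact hy.2
  obtain ⟨h2, h3⟩ := hrs y hb
  have hy0 := hy.1
  constructor
  · unfold phi; positivity
  · have : phi ℓ a κ y = g y * y := by simp only [phi, hg]; ring
    rw [this]
    gcongr

lemma eig_iff {Z : ℝ} (hZ : 0 < Z) (ℓ : ℕ) {h R ν : ℝ} (hh : 0 < h) (hR : 0 < R) (hν : 0 < ν) :
    IsEigCoulombConfined Z ℓ h R (-(Z ^ 2 / (4 * ν ^ 2 * h ^ 2))) ↔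
      kM (ℓ + 1 - ν) (2 * ℓ + 2) (Z * R / h ^ 2 / ν) = 0 := by
  set κ := Z / (2 * ν * h ^ 2) with hκ
  have hκ0 : 0 < κ := by positivity
  have hz : Z * R / h ^ 2 / ν = 2 * κ * R := by rw [hκ]; field_simp
  rw [hz]
  set a : ℝ := ℓ + 1 - ν with ha
  set q : ℝ → ℝ := fun y => ℓ * (ℓ + 1) * (y ^ 2)⁻¹ - 2 * κ * ν * y⁻¹ + κ ^ 2 with hq
  have hode : ∀ y, 0 < y → ∀ U V : ℝ, (-(h ^ 2) * V + h ^ 2 * ((ℓ : ℝ) * (ℓ + 1)) * (y ^ 2)⁻¹ * U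
        - Z * y⁻¹ * U = -(Z ^ 2 / (4 * ν ^ 2 * h ^ 2)) * U) ↔ V = q y * U := by
    intro y hy U V
    have e : -(h ^ 2) * V + h ^ 2 * ((ℓ : ℝ) * (ℓ + 1)) * (y ^ 2)⁻¹ * U
        - Z * y⁻¹ * U - (-(Z ^ 2 / (4 * ν ^ 2 * h ^ 2)) * U) = h ^ 2 * (q y * U - V) := by
      simp only [hq, hκ]; field_simp; ring
    rw [← sub_eq_zero, e]
    have : h ^ 2 ≠ 0 := by positivity
    constructor
    · intro h1
      rcases mul_eq_zero.1 h1 with h2 | h2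
      · exact absurd h2 this
      · linarith
    · intro h1; rw [h1]; ring
  have hphiR : phi ℓ a κ R = 0 ↔ kM a (2 * ℓ + 2) (2 * κ * R) = 0 := by
    unfold phi
    have : R ^ (ℓ + 1) * Real.exp (-κ * R) ≠ 0 := by positivity
    rw [mul_eq_zero, or_iff_right this]
  obtain ⟨δ, K, hδ, hK, hnear⟩ := phi_near_zero ℓ a κ
  rw [← hphiR]
  have hd1 : deriv (phi ℓ a κ) = phi1 ℓ a κ := funext fun y => (phi_hasDerivAt ℓ a κ y).deriv
  constructor
  · rintro ⟨-, u, hne, hcd, hu0, huR, hu⟩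
    have hcd' : ContDiffOn ℝ 2 u (Ioo 0 R) := hcd.mono Ioo_subset_Ioc_self
    have h1 : ∀ x ∈ Ioo 0 R, HasDerivAt u (deriv u x) x := fun x hx =>
      ((hcd'.differentiableOn (by norm_num)) x hx).differentiableAt (isOpen_Ioo.mem_nhds hx) |>.hasDerivAt
    have h2 : ∀ x ∈ Ioo 0 R, HasDerivAt (deriv u) (q x * u x) x := by
      intro x hx
      have : ContDiffOn ℝ 1 (deriv u) (Ioo 0 R) := hcd'.deriv_of_isOpen isOpen_Ioo (by norm_num)
      have h3 := ((this.differentiableOn (by norm_num)) x hx).differentiableAt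
        (isOpen_Ioo.mem_nhds hx) |>.hasDerivAt
      rwa [(hode x hx.1 _ _).1 (hu x hx)] at h3
    refine eig_forces_zero (q := q) hR h1 h2 ?_ hu0 huR hcd.continuousOn hne hδ hK hnear
      (phi1_continuous ℓ a κ).continuousAt (fun x _ => phi_hasDerivAt ℓ a κ x)
      (fun x hx => phi1_hasDerivAt ℓ a κ ν x hx.ne' ha)
    intro y hy
    have hy0 : y ≠ 0 := (mem_Ioi.1 hy).ne'
    have : ContinuousAt q y := by
      simp only [hq]
      fun_prop (disch := simp [hy0])
    exact this.continuousWithinAt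
  · intro h0
    refine ⟨by rw [neg_lt_zero]; positivity, phi ℓ a κ, ?_, ?_, ?_, h0, ?_⟩
    · refine ⟨min R δ / 2, ?_, ?_⟩
      · have : 0 < min R δ := by positivity
        have := min_le_left R δ
        constructor <;> linarith
      · have h1 : 0 < min R δ := by positivity
        have := min_le_right R δ
        exact (hnear _ ⟨by linarith, by linarith⟩).1.ne'
    · have hcd : ContDiffOn ℝ 2 (phi ℓ a κ) (Ioi 0) := by
        rw [show (2 : WithTop ℕ∞) = 1 + 1 by norm_num, contDiffOn_succ_iff_deriv_of_isOpen isOpen_Ioi]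
        refine ⟨fun x _ => (phi_hasDerivAt ℓ a κ x).differentiableAt.differentiableWithinAt, by simp, ?_⟩
        rw [hd1, show (1 : WithTop ℕ∞) = 0 + 1 by norm_num, contDiffOn_succ_iff_deriv_of_isOpen isOpen_Ioi]
        refine ⟨fun x hx => (phi1_hasDerivAt ℓ a κ ν x (mem_Ioi.1 hx).ne' ha).differentiableAt.differentiableWithinAt,
          by simp, ?_⟩
        rw [contDiffOn_zero]
        intro x hx
        have hx0 : x ≠ 0 := (mem_Ioi.1 hx).ne'
        have h1 : ContinuousAt (fun y => q y * phi ℓ a κ y) x := by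
          have h2 : ContinuousAt q x := by
            simp only [hq]
            fun_prop (disch := simp [hx0])
          exact h2.mul (phi_hasDerivAt ℓ a κ x).continuousAt
        refine (h1.congr ?_).continuousWithinAt
        filter_upwards [isOpen_Ioi.mem_nhds hx] with y hy
        exact (phi1_hasDerivAt ℓ a κ ν y (mem_Ioi.1 hy).ne' ha).deriv.symm
      exact hcd.mono (fun x hx => hx.1)
    · have h1 := (phi_hasDerivAt ℓ a κ 0).continuousAt.tendsto
      rw [show phi ℓ a κ 0 = 0 by simp [phi]] at h1
      exact h1.mono_left nhdsWithin_le_nhds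
    · intro x hx
      rw [hode x hx.1, hd1]
      exact (phi1_hasDerivAt ℓ a κ ν x hx.1.ne' ha).deriv

set_option maxHeartbeats 2000000 in
lemma abstract_root (P Q : ℝ → ℝ → ℝ) (m r : ℕ) (A B C c z0 : ℝ)
    (hB : 0 < B) (hC : 0 < C) (hc : 0 < c)
    (h1 : ∀ z, z0 ≤ z → ∀ η ∈ Icc (0:ℝ) (1/2), 0 < P η z ∧ P η z ≤ C * z ^ m)
    (h2 : ∀ z, z0 ≤ z → ∀ η ∈ Icc (0:ℝ) (1/2), ∀ η' ∈ Icc (0:ℝ) (1/2),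
      |P η z - P η' z| ≤ C * z ^ m * |η - η'|)
    (h3 : ∀ z, z0 ≤ z → ∀ η ∈ Icc (0:ℝ) (1/2), ∀ η' ∈ Icc (0:ℝ) (1/2),
      |Q η z - Q η' z| ≤ C * (z * Real.exp z) * |η - η'|)
    (h4 : ∀ z, z0 ≤ z → ∀ η ∈ Icc (0:ℝ) (1/2), c * z ^ (m + r + 2) ≤ Q η z)
    (h5 : ∀ z, z0 ≤ z → |Q 0 z * z ^ r - B * Real.exp z| ≤ C * (Real.exp z / z))
    (h6 : ∀ z, z0 ≤ z → |P 0 z - A * z ^ m| ≤ C * (z ^ m / z)) :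
    ∃ z1 D : ℝ, 0 < z1 ∧ 0 < D ∧ ∀ z, z1 ≤ z → ∃ η ∈ Ioo (0:ℝ) (1/2), P η z = η * Q η z ∧
      |η - A / B * (z ^ (m + r) * Real.exp (-z))| ≤ D / z * (z ^ (m + r) * Real.exp (-z)) ∧
      ∀ η' ∈ Icc (0:ℝ) (1/2), P η' z = η' * Q η' z → η' = η := by
  obtain ⟨z2, hz2⟩ : ∃ z2 : ℝ, ∀ z, z2 ≤ z → z ^ (m + 2 * r + 2) ≤ Real.exp z := by
    have := (Real.tendsto_exp_div_pow_atTop (m + 2 * r + 2)).eventually_ge_atTop 1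
    obtain ⟨a, ha⟩ := eventually_atTop.1 (this.and (eventually_gt_atTop 0))
    refine ⟨a, fun z hz => ?_⟩
    obtain ⟨h, h'⟩ := ha z hz
    rwa [le_div_iff₀ (by positivity), one_mul] at h
  set Y := 4 * C / B with hY
  have hY0 : 0 < Y := by positivity
  set z1 := max (max (max z0 1) (max z2 (2 * C / B))) (max (max (B / (4 * C)) (8 * C ^ 2 / (B * c) + 1))
    (4 * C / B + 1)) with hz1
  refine ⟨z1, (2 * C * Y + C * Y ^ 2 + C) / B, ?_, by positivity, ?_⟩
  · have : (1:ℝ) ≤ z1 := by simp [hz1]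
    linarith
  intro z hz
  simp only [hz1, max_le_iff] at hz
  obtain ⟨⟨⟨hz0, hzone⟩, hze, hzB⟩, ⟨hzb, hza⟩, hzc⟩ := hz
  have hzp : 0 < z := by linarith
  have hE : 0 < Real.exp z := Real.exp_pos z
  set E := Real.exp z with hEd
  have hEe : Real.exp (-z) = E⁻¹ := Real.exp_neg z
  rw [hEe]
  have hbig := hz2 z hze
  have h0m : (0:ℝ) ∈ Icc (0:ℝ) (1/2) := by constructor <;> norm_num
  have hhm : (1/2:ℝ) ∈ Icc (0:ℝ) (1/2) := by constructor <;> norm_num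
  have hq5 := h5 z hz0
  have hCz : C / z ≤ B / 2 := by
    rw [div_le_iff₀ hzp]; rw [div_le_iff₀ hB] at hzB; linarith
  have hQ0 : B / 2 * E ≤ Q 0 z * z ^ r := by
    have h := (abs_le.1 hq5).1
    have : C * (E / z) = C / z * E := by ring
    rw [this] at h
    nlinarith
  set η0 := B / (8 * C) / z ^ (r + 1) with hη0
  have hη0p : 0 < η0 := by positivity
  have hzr : z ≤ z ^ (r + 1) := by
    calc z = z ^ 1 := (pow_one z).symm
      _ ≤ z ^ (r + 1) := pow_le_pow_right₀ hzone (by omega)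
  have hη0h : η0 ≤ 1 / 2 := by
    rw [hη0, div_le_iff₀ (by positivity)]
    have : B / (8 * C) = B / (4 * C) / 2 := by field_simp; norm_num
    rw [this]; linarith
  have hη0e : η0 * (C * (z * E)) * z ^ r = B / 8 * E := by
    rw [hη0]; field_simp; ring
  have hlarge : ∀ η ∈ Icc (0:ℝ) (1/2), η0 ≤ η → P η z < η * Q η z := by
    intro η hη hηη
    have hq := h4 z hz0 η hη
    have hp := (h1 z hz0 η hη).2
    have e1 : η0 * (c * z ^ (m + r + 2)) = B * c / (8 * C) * z * z ^ m := by
      rw [hη0]; field_simp; ring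
    have e2 : C < B * c / (8 * C) * z := by
      have : 8 * C ^ 2 / (B * c) < z := by linarith
      rw [div_lt_iff₀ (by positivity)] at this
      rw [div_mul_eq_mul_div, lt_div_iff₀ (by positivity)]; linarith
    calc P η z ≤ C * z ^ m := hp
      _ < B * c / (8 * C) * z * z ^ m := by gcongr
      _ = η0 * (c * z ^ (m + r + 2)) := e1.symm
      _ ≤ η * Q η z := by
        apply mul_le_mul hηη hq (by positivity) hη.1
  have hQ0p : 0 < Q 0 z := by
    have := h4 z hz0 0 h0m
    have : 0 < c * z ^ (m + r + 2) := by positivity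
    linarith
  have hη0Q : η0 * (C * (z * E)) ≤ Q 0 z / 4 := by
    have : η0 * (C * (z * E)) * z ^ r ≤ Q 0 z / 4 * z ^ r := by rw [hη0e]; linarith
    exact le_of_mul_le_mul_right this (by positivity)
  have hsmall : ∀ η ∈ Icc (0:ℝ) (1/2), η ≤ η0 → Q 0 z * (3/4) ≤ Q η z := by
    intro η hη hηη
    have h := (abs_le.1 (h3 z hz0 η hη 0 h0m)).1
    rw [sub_zero, abs_of_nonneg hη.1] at h
    have : C * (z * E) * η ≤ η0 * (C * (z * E)) := by
      rw [mul_comm]; gcongr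
    linarith
  have hCQ : C * z ^ m < Q 0 z / 2 := by
    have e1 : C * z ^ m * z ^ r < Q 0 z / 2 * z ^ r := by
      have e3 : 4 * C < B * z := by
        have : 4 * C / B < z := by linarith
        rw [div_lt_iff₀ hB] at this; linarith
      have e4 : z ^ (m + r) * z ≤ E := by
        refine le_trans ?_ hbig
        rw [← pow_succ]; exact pow_le_pow_right₀ hzone (by omega)
      have e5 : 4 * C * z ^ (m + r) < B * E := by
        calc 4 * C * z ^ (m + r) < B * z * z ^ (m + r) := by gcongr
          _ = B * (z ^ (m + r) * z) := by ring
          _ ≤ B * E := by gcongr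
      rw [pow_add] at e5
      nlinarith
    exact lt_of_mul_lt_mul_right e1 (by positivity)
  have hmono : ∀ η ∈ Icc (0:ℝ) (1/2), ∀ η' ∈ Icc (0:ℝ) (1/2), η < η' → η' ≤ η0 →
      P η z = η * Q η z → P η' z = η' * Q η' z → False := by
    intro η hη η' hη' hlt hle e e'
    have hq := h3 z hz0 η' hη' η hη
    have hp := h2 z hz0 η' hη' η hη
    rw [abs_of_pos (show 0 < η' - η by linarith)] at hq hp
    have hp' := (abs_le.1 hp).2
    have hq' := (abs_le.1 hq).1
    have hs := hsmall η hη (by linarith)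
    have hd : 0 < η' - η := by linarith
    have a1 : η' * (-(C * (z * E) * (η' - η))) ≤ η' * (Q η' z - Q η z) :=
      mul_le_mul_of_nonneg_left hq' hη'.1
    have a2 : η' * (C * (z * E)) ≤ Q 0 z / 4 := le_trans (by gcongr) hη0Q
    have a3 : η' * (C * (z * E)) * (η' - η) ≤ Q 0 z / 4 * (η' - η) := by gcongr
    have a4 : Q 0 z * (3/4) * (η' - η) ≤ Q η z * (η' - η) := by gcongr
    have a5 : C * z ^ m * (η' - η) < Q 0 z / 2 * (η' - η) := by gcongr
    have e3 : P η' z - P η z = (η' - η) * Q η z + η' * (Q η' z - Q η z) := by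
      rw [e, e']; ring
    nlinarith
  have huniq : ∀ η ∈ Icc (0:ℝ) (1/2), ∀ η' ∈ Icc (0:ℝ) (1/2),
      P η z = η * Q η z → P η' z = η' * Q η' z → η' = η := by
    intro η hη η' hη' e e'
    have hl : η ≤ η0 := by
      by_contra hcon; push Not at hcon
      have := hlarge η hη hcon.le; linarith
    have hl' : η' ≤ η0 := by
      by_contra hcon; push Not at hcon
      have := hlarge η' hη' hcon.le; linarith
    rcases lt_trichotomy η η' with h | h | h
    · exact (hmono η hη η' hη' h hl' e e').elim
    · exact h.symm
    · exact (hmono η' hη' η hη h hl e' e).elim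
  have hcontP : ContinuousOn (fun η => P η z) (Icc (0:ℝ) (1/2)) := by
    have : LipschitzOnWith ⟨C * z ^ m, by positivity⟩ (fun η => P η z) (Icc (0:ℝ) (1/2)) := by
      apply LipschitzOnWith.of_dist_le_mul
      intro x hx y hy
      rw [Real.dist_eq, Real.dist_eq]
      exact h2 z hz0 x hx y hy
    exact this.continuousOn
  have hcontQ : ContinuousOn (fun η => Q η z) (Icc (0:ℝ) (1/2)) := by
    have : LipschitzOnWith ⟨C * (z * E), by positivity⟩ (fun η => Q η z) (Icc (0:ℝ) (1/2)) := by
      apply LipschitzOnWith.of_dist_le_mul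
      intro x hx y hy
      rw [Real.dist_eq, Real.dist_eq]
      exact h3 z hz0 x hx y hy
    exact this.continuousOn
  have hcont : ContinuousOn (fun η => η * Q η z - P η z) (Icc (0:ℝ) (1/2)) :=
    (continuousOn_id.mul hcontQ).sub hcontP
  have hf0 := (h1 z hz0 0 h0m).1
  have hfh := hlarge (1/2) hhm hη0h
  obtain ⟨η, hη, hroot⟩ := intermediate_value_Icc (by norm_num : (0:ℝ) ≤ 1/2) hcont
    (show (0:ℝ) ∈ Icc _ _ from ⟨by simp only [zero_mul]; linarith, by linarith⟩)
  simp only at hroot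
  have hroot' : P η z = η * Q η z := by linarith
  have hηpos : 0 < η := by
    rcases hη.1.lt_or_eq with h | h
    · exact h
    · rw [← h] at hroot'; rw [zero_mul] at hroot'; linarith
  have hηlt : η < η0 := by
    by_contra hcon; push Not at hcon
    have := hlarge η hη hcon; linarith
  refine ⟨η, ⟨hηpos, hηlt.trans_le hη0h⟩, hroot', ?_, fun η' hη' e' => huniq η hη η' hη' hroot' e'⟩
  obtain ⟨q, hq⟩ : ∃ q, q = Q 0 z * z ^ r / E := ⟨_, rfl⟩
  obtain ⟨p, hp⟩ : ∃ p, p = P 0 z / z ^ m := ⟨_, rfl⟩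
  obtain ⟨y, hy⟩ : ∃ y, y = η / (z ^ (m + r) * E⁻¹) := ⟨_, rfl⟩
  have hτ : 0 < z ^ (m + r) * E⁻¹ := by positivity
  have hηy : η = y * (z ^ (m + r) * E⁻¹) := by rw [hy, div_mul_cancel₀ _ hτ.ne']
  have hy0 : 0 < y := by rw [hy]; positivity
  have hQq : Q 0 z * z ^ r = q * E := by rw [hq]; field_simp
  have hPp : P 0 z = p * z ^ m := by rw [hp]; field_simp
  have hqB : |q - B| ≤ C / z := by
    have e : q * E - B * E = (q - B) * E := by ring
    rw [hQq, e, abs_mul, abs_of_pos hE, show C * (E / z) = C / z * E by ring] at hq5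
    exact le_of_mul_le_mul_right hq5 hE
  have hpA : |p - A| ≤ C / z := by
    have h := h6 z hz0
    have e : p * z ^ m - A * z ^ m = (p - A) * z ^ m := by ring
    rw [hPp, e, abs_mul, abs_of_pos (by positivity : 0 < z ^ m),
      show C * (z ^ m / z) = C / z * z ^ m by ring] at h
    exact le_of_mul_le_mul_right h (by positivity)
  have hqlow : B / 2 ≤ q := by have := (abs_le.1 hqB).1; linarith
  have hηQ : η * Q 0 z = y * q * z ^ m := by
    have : η * (Q 0 z * z ^ r) = y * q * z ^ m * z ^ r := by
      rw [hQq, hηy, pow_add]; field_simp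
    have hzr' : z ^ r ≠ 0 := by positivity
    apply mul_right_cancel₀ hzr'
    linarith
  have hyY : y ≤ Y := by
    have hs := hsmall η hη hηlt.le
    have hpu := (h1 z hz0 η hη).2
    have a1 : η * (Q 0 z * (3/4)) ≤ C * z ^ m := by
      calc η * (Q 0 z * (3/4)) ≤ η * Q η z := by gcongr
        _ = P η z := hroot'.symm
        _ ≤ _ := hpu
    have a2 : y * q * z ^ m ≤ 2 * C * z ^ m := by
      rw [← hηQ]; nlinarith [mul_pos hηpos hQ0p]
    have a3 : y * q ≤ 2 * C := le_of_mul_le_mul_right a2 (by positivity)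
    rw [hY, le_div_iff₀ hB]
    nlinarith
  have hmain : |y * q - p| ≤ (C * Y ^ 2 + C * Y) / z := by
    have b1 := h3 z hz0 η hη 0 h0m
    have b2 := h2 z hz0 η hη 0 h0m
    rw [sub_zero, abs_of_pos hηpos] at b1 b2
    have b3 : |η * Q 0 z - P 0 z| ≤ η * (C * (z * E) * η) + C * z ^ m * η := by
      have e : η * Q 0 z - P 0 z = -(η * (Q η z - Q 0 z)) + (P η z - P 0 z) := by
        rw [hroot']; ring
      rw [e]
      refine (abs_add_le _ _).trans ?_
      rw [abs_neg, abs_mul, abs_of_pos hηpos]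
      gcongr
    have b4 : η * Q 0 z - P 0 z = (y * q - p) * z ^ m := by rw [hηQ, hPp]; ring
    have b5 : η * (C * (z * E) * η) + C * z ^ m * η =
        (C * y ^ 2 * (z ^ (m + 2 * r + 2) / E) / z + C * y * (z ^ (m + r + 1) / E) / z) * z ^ m := by
      rw [hηy]; field_simp; ring
    rw [b4, b5, abs_mul, abs_of_pos (by positivity : 0 < z ^ m)] at b3
    have b6 := le_of_mul_le_mul_right b3 (by positivity)
    refine b6.trans ?_
    have c1 : z ^ (m + 2 * r + 2) / E ≤ 1 := by rw [div_le_one hE]; exact hbig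
    have c2 : z ^ (m + r + 1) / E ≤ 1 := by
      rw [div_le_one hE]; exact le_trans (pow_le_pow_right₀ hzone (by omega)) hbig
    rw [← add_div]
    apply div_le_div_of_nonneg_right _ hzp.le
    apply add_le_add
    · calc C * y ^ 2 * (z ^ (m + 2 * r + 2) / E) ≤ C * Y ^ 2 * 1 := by gcongr
        _ = _ := by ring
    · calc C * y * (z ^ (m + r + 1) / E) ≤ C * Y * 1 := by gcongr
        _ = _ := by ring
  have hfin : |y * B - A| ≤ (2 * C * Y + C * Y ^ 2 + C) / z := by
    have e : y * B - A = -(y * (q - B)) + (y * q - p) + (p - A) := by ring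
    rw [e]
    have d1 : |-(y * (q - B))| ≤ Y * (C / z) := by
      rw [abs_neg, abs_mul, abs_of_pos hy0]; gcongr
    have d2 := abs_add_le (-(y * (q - B)) + (y * q - p)) (p - A)
    have d3 := abs_add_le (-(y * (q - B))) (y * q - p)
    have d4 : (2 * C * Y + C * Y ^ 2 + C) / z = Y * (C / z) + (C * Y ^ 2 + C * Y) / z + C / z := by
      field_simp; ring
    rw [d4]; linarith
  have e : η - A / B * (z ^ (m + r) * E⁻¹) = (y * B - A) / B * (z ^ (m + r) * E⁻¹) := by
    rw [hηy]; field_simp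
  rw [e, abs_mul, abs_of_pos hτ, abs_div, abs_of_pos hB]
  refine mul_le_mul_of_nonneg_right ?_ hτ.le
  rw [div_div, mul_comm B z, ← div_div]
  exact div_le_div_of_nonneg_right hfin hB.le

lemma hasSum_exp_real (z : ℝ) : HasSum (fun k : ℕ => z ^ k / (k.factorial : ℝ)) (Real.exp z) := by
  rw [Real.exp_eq_exp_ℝ]
  exact NormedSpace.expSeries_div_hasSum_exp z

lemma rho_bounds (c N : ℕ) : ∃ D : ℝ, 0 < D ∧ ∀ i : ℕ,
    1 ≤ (i.factorial : ℝ) * ((i + N + c).factorial : ℝ) /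
      (((c + i).factorial : ℝ) * ((i + N).factorial : ℝ)) ∧
    (i.factorial : ℝ) * ((i + N + c).factorial : ℝ) /
      (((c + i).factorial : ℝ) * ((i + N).factorial : ℝ)) ≤ 1 + D / (i + 1) := by
  induction N with
  | zero =>
    refine ⟨1, one_pos, fun i => ?_⟩
    have : (i.factorial : ℝ) * ((i + 0 + c).factorial : ℝ) /
      (((c + i).factorial : ℝ) * ((i + 0).factorial : ℝ)) = 1 := by
      rw [add_zero, add_comm c i, mul_comm]; field_simp
    rw [this]
    refine ⟨le_rfl, ?_⟩
    have : (0:ℝ) ≤ 1 / (i + 1) := by positivity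
    linarith
  | succ N ih =>
    obtain ⟨D, hD, h⟩ := ih
    refine ⟨D + c * (1 + D), by positivity, fun i => ?_⟩
    obtain ⟨h1, h2⟩ := h i
    set ρ := (i.factorial : ℝ) * ((i + N + c).factorial : ℝ) /
      (((c + i).factorial : ℝ) * ((i + N).factorial : ℝ)) with hρ
    have e : (i.factorial : ℝ) * ((i + (N + 1) + c).factorial : ℝ) /
      (((c + i).factorial : ℝ) * ((i + (N + 1)).factorial : ℝ)) = ρ * (1 + c / (i + N + 1)) := by
      have e1 : i + (N + 1) + c = (i + N + c) + 1 := by ring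
      have e2 : i + (N + 1) = (i + N) + 1 := by ring
      rw [e1, e2, Nat.factorial_succ, Nat.factorial_succ, hρ]
      push_cast
      field_simp
      ring
    rw [e]
    have h3 : (0:ℝ) ≤ c / (i + N + 1) := by positivity
    have h4 : (c:ℝ) / (i + N + 1) ≤ c / (i + 1) := by
      gcongr
      linarith [(Nat.cast_nonneg N : (0:ℝ) ≤ N)]
    constructor
    · nlinarith
    · have h5 : (0:ℝ) < (i:ℝ) + 1 := by positivity
      have h6 : D / ((i:ℝ) + 1) ≤ D := by
        apply div_le_self hD.le; linarith [(Nat.cast_nonneg i : (0:ℝ) ≤ i)]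
      have h7 : ρ * (c / (i + N + 1)) ≤ (1 + D) * (c / (i + 1)) := by
        apply mul_le_mul _ h4 h3 (by positivity)
        linarith
      have : (D + c * (1 + D)) / ((i:ℝ) + 1) = D / (i + 1) + (1 + D) * (c / (i + 1)) := by ring
      rw [this]; linarith

lemma S_asymp (m c : ℕ) : ∃ D : ℝ, 0 < D ∧ ∀ z : ℝ, 1 ≤ z →
    |(∑' i : ℕ, (i.factorial : ℝ) / ((c + i).factorial : ℝ) *
      (z ^ (i + (m + 1)) / ((i + (m + 1)).factorial : ℝ))) * z ^ c - Real.exp z|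
      ≤ D * (Real.exp z / z) := by
  obtain ⟨D, hD, hρ⟩ := rho_bounds c (m + 1)
  set s := m + 1 + c with hs
  refine ⟨D * (s + 1) + s, by positivity, fun z hz => ?_⟩
  have hz0 : 0 < z := by linarith
  set t : ℕ → ℝ := fun k => z ^ k / (k.factorial : ℝ) with ht
  have htpos : ∀ k, 0 ≤ t k := fun k => by simp only [ht]; positivity
  have hsum : HasSum t (Real.exp z) := hasSum_exp_real z
  have hsummable := hsum.summable
  have hle : ∀ j, ∑' i, t (i + j) ≤ Real.exp z := by
    intro j
    have h1 := hsummable.sum_add_tsum_nat_add j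
    have h2 : 0 ≤ ∑ i ∈ Finset.range j, t i := Finset.sum_nonneg fun i _ => htpos i
    rw [hsum.tsum_eq] at h1; linarith
  have hstep : ∀ k, t k = (k + 1) * t (k + 1) / z := by
    intro k
    simp only [ht]
    rw [Nat.factorial_succ, pow_succ]
    push_cast; field_simp
  set ρ : ℕ → ℝ := fun i => (i.factorial : ℝ) * ((i + (m + 1) + c).factorial : ℝ) /
      (((c + i).factorial : ℝ) * ((i + (m + 1)).factorial : ℝ)) with hρd
  have e1 : (∑' i : ℕ, (i.factorial : ℝ) / ((c + i).factorial : ℝ) *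
      (z ^ (i + (m + 1)) / ((i + (m + 1)).factorial : ℝ))) * z ^ c = ∑' i, ρ i * t (i + s) := by
    rw [← tsum_mul_right]
    congr 1; ext i
    simp only [hρd, ht, hs]
    rw [← add_assoc i (m+1) c, pow_add z (i + (m+1)) c]
    field_simp
  have hts : Summable (fun i => t (i + s)) := (summable_nat_add_iff s).2 hsummable
  have hb : ∀ i, 0 ≤ (ρ i - 1) * t (i + s) ∧
      (ρ i - 1) * t (i + s) ≤ D * (s + 1) / z * t (i + (s + 1)) := by
    intro i
    obtain ⟨h1, h2⟩ := hρ i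
    refine ⟨mul_nonneg (by simp only [hρd]; linarith) (htpos _), ?_⟩
    have h3 : (ρ i - 1) * t (i + s) ≤ D / (i + 1) * t (i + s) := by
      apply mul_le_mul_of_nonneg_right _ (htpos _)
      simp only [hρd]; linarith
    refine h3.trans ?_
    rw [hstep (i + s), add_assoc i s 1]
    have h4 : 0 ≤ t (i + (s + 1)) := htpos _
    have h5 : (((i + s : ℕ) : ℝ) + 1) / (i + 1) ≤ s + 1 := by
      rw [div_le_iff₀ (by positivity)]
      push_cast
      nlinarith [(Nat.cast_nonneg i : (0:ℝ) ≤ i), (Nat.cast_nonneg s : (0:ℝ) ≤ s),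
        mul_nonneg (Nat.cast_nonneg i : (0:ℝ) ≤ i) (Nat.cast_nonneg s : (0:ℝ) ≤ s)]
    calc D / (i + 1) * ((((i + s : ℕ) : ℝ) + 1) * t (i + (s + 1)) / z)
        = D * ((((i + s : ℕ) : ℝ) + 1) / (i + 1)) / z * t (i + (s + 1)) := by field_simp
      _ ≤ D * (s + 1) / z * t (i + (s + 1)) := by gcongr
  have hts1 : Summable (fun i => D * (s + 1) / z * t (i + (s + 1))) :=
    ((summable_nat_add_iff (s + 1)).2 hsummable).mul_left _
  have hdiff : Summable (fun i => (ρ i - 1) * t (i + s)) :=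
    Summable.of_nonneg_of_le (fun i => (hb i).1) (fun i => (hb i).2) hts1
  have e2 : ∑' i, ρ i * t (i + s) = ∑' i, (ρ i - 1) * t (i + s) + ∑' i, t (i + s) := by
    rw [← hdiff.tsum_add hts]
    congr 1; ext i; ring
  have e3 := hsummable.sum_add_tsum_nat_add s
  rw [hsum.tsum_eq] at e3
  have h6 : ∑' i, (ρ i - 1) * t (i + s) ≤ D * (s + 1) * (Real.exp z / z) := by
    refine (hdiff.tsum_le_tsum (fun i => (hb i).2) hts1).trans ?_
    rw [tsum_mul_left]
    calc D * (s + 1) / z * ∑' i, t (i + (s + 1)) ≤ D * (s + 1) / z * Real.exp z := by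
          gcongr; exact hle _
      _ = _ := by ring
  have h7 : 0 ≤ ∑' i, (ρ i - 1) * t (i + s) := tsum_nonneg fun i => (hb i).1
  have h8 : 0 ≤ ∑ i ∈ Finset.range s, t i := Finset.sum_nonneg fun i _ => htpos i
  have h9 : ∑ i ∈ Finset.range s, t i ≤ s * (Real.exp z / z) := by
    have h10 : ∀ i ∈ Finset.range s, t i ≤ s / z * t (i + 1) := by
      intro i hi
      rw [hstep i]
      have : ((i:ℝ) + 1) ≤ s := by
        have := Finset.mem_range.1 hi
        exact_mod_cast this
      have h4 := htpos (i + 1)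
      calc ((i:ℝ) + 1) * t (i + 1) / z ≤ s * t (i + 1) / z := by gcongr
        _ = _ := by ring
    refine (Finset.sum_le_sum h10).trans ?_
    rw [← Finset.mul_sum]
    have h11 : ∑ i ∈ Finset.range s, t (i + 1) ≤ Real.exp z := by
      refine le_trans ?_ (hle 1)
      exact ((summable_nat_add_iff 1).2 hsummable).sum_le_tsum _ (fun i _ => htpos _)
    calc s / z * ∑ i ∈ Finset.range s, t (i + 1) ≤ s / z * Real.exp z := by gcongr
      _ = _ := by ring
  rw [e1, e2, ← e3]
  have hexp : 0 ≤ Real.exp z / z := by positivity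
  rw [e3, abs_le]
  have : 0 ≤ (s:ℝ) * (Real.exp z / z) := by positivity
  have : 0 ≤ D * (s+1) * (Real.exp z / z) := by positivity
  constructor <;> nlinarith

/-- bounded and Lipschitz on `[0,1/2]`. -/
def BL (f : ℝ → ℝ) (M K : ℝ) : Prop :=
  0 ≤ M ∧ 0 ≤ K ∧ (∀ η ∈ Icc (0:ℝ) (1/2), |f η| ≤ M) ∧
    ∀ η ∈ Icc (0:ℝ) (1/2), ∀ η' ∈ Icc (0:ℝ) (1/2), |f η - f η'| ≤ K * |η - η'|

lemma BL.mul {f g : ℝ → ℝ} {M K M' K' : ℝ} (hf : BL f M K) (hg : BL g M' K') :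
    BL (fun η => f η * g η) (M * M') (M * K' + K * M') := by
  obtain ⟨a1, a2, a3, a4⟩ := hf
  obtain ⟨b1, b2, b3, b4⟩ := hg
  refine ⟨by positivity, by positivity, fun η h => ?_, fun η h η' h' => ?_⟩
  · rw [abs_mul]; exact mul_le_mul (a3 η h) (b3 η h) (abs_nonneg _) a1
  · have e : f η * g η - f η' * g η' = f η * (g η - g η') + (f η - f η') * g η' := by ring
    rw [e]
    refine (abs_add_le _ _).trans ?_
    rw [abs_mul, abs_mul]
    have h1 := mul_le_mul (a3 η h) (b4 η h η' h') (abs_nonneg _) a1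
    have h2 := mul_le_mul (a4 η h η' h') (b3 η' h') (abs_nonneg _) (by positivity)
    calc _ ≤ _ := add_le_add h1 h2
      _ = _ := by ring

lemma BL.const (c : ℝ) : BL (fun _ => c) |c| 0 :=
  ⟨abs_nonneg _, le_rfl, fun _ _ => le_rfl, fun _ _ _ _ => by simp⟩

lemma BL.prod_one {f : ℕ → ℝ → ℝ} (hf : ∀ i, BL (f i) 1 1) (n : ℕ) :
    BL (fun η => ∏ i ∈ Finset.range n, f i η) 1 n := by
  induction n with
  | zero => simpa using BL.const 1
  | succ n ih =>
    have := ih.mul (hf n)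
    simp only [Finset.prod_range_succ]
    convert this using 1
    · norm_num
    · push_cast; ring

lemma BL.pow_one {f : ℝ → ℝ} (hf : BL f 1 1) (n : ℕ) : BL (fun η => f η ^ n) 1 n := by
  have := BL.prod_one (f := fun _ => f) (fun _ => hf) n
  simpa using this

lemma BL.prod_ex {f : ℕ → ℝ → ℝ} (hf : ∀ i, ∃ M K, BL (f i) M K) (n : ℕ) :
    ∃ M K, BL (fun η => ∏ i ∈ Finset.range n, f i η) M K := by
  induction n with
  | zero => exact ⟨_, _, by simpa using BL.const 1⟩
  | succ n ih =>
    obtain ⟨M, K, h⟩ := ih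
    obtain ⟨M', K', h'⟩ := hf n
    refine ⟨M * M', M * K' + K * M', ?_⟩
    simp only [Finset.prod_range_succ]
    exact h.mul h'

lemma BL.theta {N : ℝ} (hN : 1 ≤ N) : BL (fun η => N / (N + η)) 1 1 := by
  refine ⟨zero_le_one, zero_le_one, fun η h => ?_, fun η h η' h' => ?_⟩
  · have : 0 < N + η := by linarith [h.1]
    rw [abs_of_nonneg (by positivity), div_le_one this]; linarith [h.1]
  · have h1 : 0 < N + η := by linarith [h.1]
    have h2 : 0 < N + η' := by linarith [h'.1]
    have e : N / (N + η) - N / (N + η') = (N / ((N + η) * (N + η'))) * (η' - η) := by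
      field_simp; ring
    rw [e, abs_mul, abs_sub_comm η' η, abs_of_nonneg (by positivity)]
    gcongr
    rw [div_le_one (by positivity)]
    nlinarith [h.1, h'.1]

lemma BL.lin {i d : ℝ} (hi : 0 ≤ i) (hd : i + 1 ≤ d) : BL (fun η => (i + 1 - η) / d) 1 1 := by
  refine ⟨zero_le_one, zero_le_one, fun η h => ?_, fun η h η' h' => ?_⟩
  · have : 0 < d := by linarith
    have := h.2
    rw [abs_of_nonneg (div_nonneg (by linarith) (by linarith)), div_le_one (by linarith)]
    linarith [h.1]
  · have hd0 : 0 < d := by linarith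
    have e : (i + 1 - η) / d - (i + 1 - η') / d = (1 / d) * (η' - η) := by
      field_simp; ring
    rw [e, abs_mul, abs_sub_comm η' η, abs_of_nonneg (by positivity)]
    gcongr
    rw [div_le_one (by positivity)]; linarith

lemma BL.aff (α β : ℝ) : ∃ M K, BL (fun η => α + β * η) M K := by
  refine ⟨|α| + |β|, |β|, by positivity, by positivity, fun η h => ?_, fun η h η' h' => ?_⟩
  · refine (abs_add_le _ _).trans ?_
    rw [abs_mul, abs_of_nonneg h.1]
    have := mul_le_mul_of_nonneg_left h.2 (abs_nonneg β)
    linarith [abs_nonneg β]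
  · rw [← abs_mul]; apply le_of_eq; congr 1; ring

lemma BL.kc_ex (m b k : ℕ) : ∃ M K, BL (fun η => (-1) ^ m * kc (-m - η) b k) M K := by
  obtain ⟨M, K, h⟩ := BL.prod_ex (f := fun j η => (-m - η + j) / ((b:ℝ) + j)) (fun j => by
    obtain ⟨M, K, h⟩ := BL.aff ((-m + j) / ((b:ℝ) + j)) (-1 / ((b:ℝ) + j))
    refine ⟨M, K, ?_⟩
    convert h using 2
    ring) k
  exact ⟨_, _, (BL.const ((-1) ^ m)).mul h⟩

lemma neg_prod_aux (f : ℕ → ℝ) (k : ℕ) :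
    (-1) ^ k * ∏ j ∈ Finset.range k, f j = ∏ j ∈ Finset.range k, (- f j) := by
  induction k with
  | zero => simp
  | succ k ih => rw [Finset.prod_range_succ, Finset.prod_range_succ, ← ih]; ring

lemma cf_top (m b : ℕ) (η : ℝ) : (-1) ^ m * kc (-m - η) b m =
    ∏ j ∈ Finset.range m, (m + η - j) / ((b:ℝ) + j) := by
  unfold kc
  rw [neg_prod_aux]
  apply Finset.prod_congr rfl
  intros; ring

lemma cf_top_lower (m b : ℕ) (hb : 1 ≤ b) {η : ℝ} (hη : -(1/2) ≤ η) :
    ∏ j ∈ Finset.range m, (1/2) / ((b:ℝ) + j) ≤ (-1) ^ m * kc (-m - η) b m := by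
  rw [cf_top]
  have hb' : (1:ℝ) ≤ b := by exact_mod_cast hb
  apply Finset.prod_le_prod
  · intros; positivity
  · intro j hj
    have : (j:ℝ) + 1 ≤ m := by exact_mod_cast Finset.mem_range.1 hj
    gcongr
    linarith

/-- tail coefficient -/
noncomputable def qc (m b i : ℕ) (η : ℝ) : ℝ :=
  ((-1) ^ m * kc (-m - η) b m) * (1 / ((b:ℝ) + m)) *
    ∏ j ∈ Finset.range i, ((j:ℝ) + 1 - η) / ((b:ℝ) + m + 1 + j)

lemma kc_tail (m b i : ℕ) (η : ℝ) :
    (-1) ^ m * kc (-m - η) b (i + (m + 1)) = -η * qc m b i η := by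
  unfold qc
  have : kc (-m - η) b (i + (m + 1)) = kc (-m - η) b m * (-η / ((b:ℝ) + m)) *
    ∏ j ∈ Finset.range i, ((j:ℝ) + 1 - η) / ((b:ℝ) + m + 1 + j) := by
    rw [add_comm i]
    unfold kc
    rw [Finset.prod_range_add, Finset.prod_range_succ]
    congr 1
    · congr 1; ring
    · apply Finset.prod_congr rfl
      intros; push_cast; congr 1 <;> ring
  rw [this]; ring

lemma qc_nonneg (m b i : ℕ) (hb : 1 ≤ b) {η : ℝ} (hη : η ∈ Icc (-(1/2):ℝ) (1/2)) :
    0 ≤ qc m b i η := by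
  unfold qc
  have hb' : (1:ℝ) ≤ b := by exact_mod_cast hb
  apply mul_nonneg
  · apply mul_nonneg
    · refine le_trans ?_ (cf_top_lower m b hb hη.1)
      apply Finset.prod_nonneg; intros; positivity
    · positivity
  · apply Finset.prod_nonneg
    intro j _
    apply div_nonneg _ (by positivity)
    linarith [hη.2, (Nat.cast_nonneg j : (0:ℝ) ≤ j)]

lemma qc_pos (m b i : ℕ) (hb : 1 ≤ b) : ∃ c > 0, ∀ η ∈ Icc (-(1/2):ℝ) (1/2),
    c ≤ qc m b i η := by
  have hb' : (1:ℝ) ≤ b := by exact_mod_cast hb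
  refine ⟨(∏ j ∈ Finset.range m, (1/2) / ((b:ℝ) + j)) * (1 / ((b:ℝ) + m)) *
    ∏ j ∈ Finset.range i, (1/2) / ((b:ℝ) + m + 1 + j), ?_, fun η hη => ?_⟩
  · apply mul_pos
    · apply mul_pos
      · apply Finset.prod_pos; intros; positivity
      · positivity
    · apply Finset.prod_pos; intros; positivity
  · unfold qc
    have h0 : (0:ℝ) ≤ ∏ j ∈ Finset.range m, (1/2) / ((b:ℝ) + j) := by
      apply Finset.prod_nonneg; intros; positivity
    have h1 := cf_top_lower m b hb hη.1
    apply mul_le_mul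
    · gcongr
    · apply Finset.prod_le_prod
      · intros; positivity
      · intro j _
        gcongr
        linarith [hη.2, (Nat.cast_nonneg j : (0:ℝ) ≤ j)]
    · apply Finset.prod_nonneg; intros; positivity
    · apply mul_nonneg (h0.trans h1); positivity

lemma qc_BL (m b : ℕ) : ∃ M K, 0 ≤ M ∧ 0 ≤ K ∧ ∀ i : ℕ, BL (qc m b i) M (M * i + K) := by
  obtain ⟨M, K, h⟩ := BL.kc_ex m b m
  have h' := h.mul (BL.const (1 / ((b:ℝ) + m)))
  refine ⟨_, _, h'.1, h'.2.1, fun i => ?_⟩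
  have := h'.mul (BL.prod_one (f := fun j η => ((j:ℝ) + 1 - η) / ((b:ℝ) + m + 1 + j))
    (fun j => BL.lin (by positivity) (by
      have : (0:ℝ) ≤ b := by positivity
      have : (0:ℝ) ≤ m := by positivity
      linarith)) i)
  rw [mul_one, mul_one] at this
  exact this

noncomputable def pp (m b : ℕ) (η w : ℝ) : ℝ :=
  ∑ k ∈ Finset.range (m + 1), ((-1) ^ m * kc (-m - η) b k) * (w ^ k / (k.factorial : ℝ))

noncomputable def qq (m b : ℕ) (η w : ℝ) : ℝ :=
  ∑' i : ℕ, qc m b i η * (w ^ (i + (m + 1)) / ((i + (m + 1)).factorial : ℝ))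

lemma kM_split (m b : ℕ) (hb : 1 ≤ b) (η w : ℝ) :
    (-1) ^ m * kM (-m - η) b w = pp m b η w - η * qq m b η w := by
  have hs : Summable (fun k : ℕ => kc (-m - η) b k * (w ^ k / (k.factorial : ℝ))) :=
    egf_summable (kc_bound _ hb) w
  have h : kM (-m - η) b w = ∑' k : ℕ, kc (-m - η) b k * (w ^ k / (k.factorial : ℝ)) := rfl
  rw [h, ← hs.sum_add_tsum_nat_add (m + 1), mul_add, Finset.mul_sum, ← tsum_mul_left, sub_eq_add_neg (pp m b η w)]
  congr 1
  · unfold pp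
    apply Finset.sum_congr rfl
    intros; ring
  · unfold qq
    rw [← neg_mul, ← tsum_mul_left]
    congr 1
    ext i
    rw [← mul_assoc, kc_tail, mul_assoc]

lemma poly_bound {m : ℕ} {d M : ℕ → ℝ} (h : ∀ k ∈ Finset.range (m + 1), |d k| ≤ M k) {z : ℝ}
    (hz : 1 ≤ z) :
    |∑ k ∈ Finset.range (m + 1), d k * (z ^ k / (k.factorial : ℝ))|
      ≤ (∑ k ∈ Finset.range (m + 1), M k) * z ^ m := by
  refine (Finset.abs_sum_le_sum_abs _ _).trans ?_
  rw [Finset.sum_mul]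
  apply Finset.sum_le_sum
  intro k hk
  have hz0 : 0 < z := by linarith
  rw [abs_mul, abs_of_nonneg (a := z ^ k / _) (by positivity)]
  have h1 : z ^ k / (k.factorial : ℝ) ≤ z ^ m := by
    refine (div_le_self (by positivity) ?_).trans
      (pow_le_pow_right₀ hz (by simpa [Nat.lt_succ_iff] using hk))
    exact_mod_cast Nat.one_le_iff_ne_zero.2 k.factorial_ne_zero
  exact mul_le_mul (h k hk) h1 (by positivity) ((abs_nonneg _).trans (h k hk))

lemma poly_bound' {m : ℕ} {d M : ℕ → ℝ} (h : ∀ k ∈ Finset.range m, |d k| ≤ M k) {z : ℝ}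
    (hz : 1 ≤ z) :
    |∑ k ∈ Finset.range m, d k * (z ^ k / (k.factorial : ℝ))|
      ≤ (∑ k ∈ Finset.range m, M k) * (z ^ m / z) := by
  have hz0 : 0 < z := by linarith
  cases m with
  | zero => simp
  | succ m =>
    refine (poly_bound h hz).trans (le_of_eq ?_)
    rw [pow_succ]; field_simp

lemma pp_pos (m b : ℕ) (hb : 1 ≤ b) : ∃ w0 : ℝ, 1 ≤ w0 ∧ ∀ η ∈ Icc (-(1/2):ℝ) (1/2), ∀ w, w0 ≤ w →
    0 < pp m b η w := by
  have hb' : (1:ℝ) ≤ b := by exact_mod_cast hb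
  set c := ∏ j ∈ Finset.range m, (1/2) / ((b:ℝ) + j) with hc
  have hc0 : 0 < c := by apply Finset.prod_pos; intros; positivity
  set M := ∑ k ∈ Finset.range m, ((m:ℝ) + 2) ^ k with hM
  have hM0 : 0 ≤ M := by apply Finset.sum_nonneg; intros; positivity
  have hf : (0:ℝ) < (m.factorial : ℝ) := by positivity
  refine ⟨M * m.factorial / c + 1, ?_, fun η hη w hw => ?_⟩
  · have : 0 ≤ M * m.factorial / c := by positivity
    linarith
  have hw1 : 1 ≤ w := by
    have : 0 ≤ M * m.factorial / c := by positivity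
    linarith
  have hw0 : 0 < w := by linarith
  unfold pp
  rw [Finset.sum_range_succ]
  have h1 := poly_bound' (m := m) (d := fun k => (-1) ^ m * kc (-m - η) b k)
    (M := fun k => ((m:ℝ) + 2) ^ k) (z := w) (fun k _ => by
      rw [abs_mul, abs_pow, abs_neg, abs_one, one_pow, one_mul]
      refine (kc_bound _ hb k).trans ?_
      have : |-(m:ℝ) - η| ≤ m + 1 := by
        rw [abs_le]; constructor <;> linarith [hη.1, hη.2, (Nat.cast_nonneg m : (0:ℝ) ≤ m)]
      exact pow_le_pow_left₀ (by positivity) (by linarith) k) hw1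
  have h2 := mul_le_mul_of_nonneg_right (cf_top_lower m b hb hη.1)
    (show 0 ≤ w ^ m / (m.factorial:ℝ) by positivity)
  rw [← hc] at h2
  have h3 : M * (w ^ m / w) < c * (w ^ m / (m.factorial : ℝ)) := by
    have : M * m.factorial < w * c := by
      rw [← div_lt_iff₀ hc0]; linarith
    have h5 : 0 < w ^ m := by positivity
    rw [mul_div_assoc', mul_div_assoc', div_lt_div_iff₀ hw0 hf]
    nlinarith
  have := (abs_le.1 h1).1
  linarith

lemma no_zero_neg (m b : ℕ) (hb : 1 ≤ b) : ∃ w0 : ℝ, 1 ≤ w0 ∧ ∀ η ∈ Icc (-(1/2):ℝ) 0, ∀ w, w0 ≤ w →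
    kM (-m - η) b w ≠ 0 := by
  obtain ⟨w0, h0, h⟩ := pp_pos m b hb
  refine ⟨w0, h0, fun η hη w hw h' => ?_⟩
  have hη' : η ∈ Icc (-(1/2):ℝ) (1/2) := ⟨hη.1, by linarith [hη.2]⟩
  have h1 := h η hη' w hw
  have h2 := kM_split m b hb η w
  rw [h', mul_zero] at h2
  have hw0 : 0 < w := by linarith
  have h3 : 0 ≤ qq m b η w := tsum_nonneg (fun i => mul_nonneg (qc_nonneg m b i hb hη') (by positivity))
  nlinarith [hη.2]

lemma hasSum_k1 (z : ℝ) : HasSum (fun k : ℕ => ((k:ℝ) + 1) * (z ^ k / (k.factorial : ℝ)))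
    ((z + 1) * Real.exp z) := by
  have h := hasSum_exp_real z
  have h1 : HasSum (fun k : ℕ => (k:ℝ) * (z ^ k / (k.factorial : ℝ))) (z * Real.exp z) := by
    rw [← hasSum_nat_add_iff' 1]
    simp only [Finset.range_one, Finset.sum_singleton, Nat.cast_zero, zero_mul, sub_zero]
    have e : (fun k : ℕ => ((k + 1 : ℕ):ℝ) * (z ^ (k + 1) / ((k + 1).factorial : ℝ))) =
        fun k : ℕ => z * (z ^ k / (k.factorial : ℝ)) := by
      ext k
      rw [Nat.factorial_succ]
      push_cast
      field_simp
      ring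
    rw [e]
    exact h.mul_left z
  convert h1.add h using 1
  · ext k; ring
  · ring

lemma asc_prod (c i : ℕ) : ∏ j ∈ Finset.range i, ((c:ℝ) + 1 + j) =
    ((c + i).factorial : ℝ) / (c.factorial : ℝ) := by
  induction i with
  | zero => simp [Nat.factorial_ne_zero]
  | succ i ih =>
    rw [Finset.prod_range_succ, ih, ← add_assoc, Nat.factorial_succ]
    push_cast; ring

lemma desc_prod (m : ℕ) : ∏ j ∈ Finset.range m, ((m:ℝ) + 0 - j) = (m.factorial : ℝ) := by
  rw [← Finset.prod_range_reflect, ← Finset.prod_range_add_one_eq_factorial]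
  push_cast
  apply Finset.prod_congr rfl
  intro j hj
  have := Finset.mem_range.1 hj
  rw [Nat.sub_sub, Nat.cast_sub (by omega)]
  push_cast; ring

lemma cf_zero (m b : ℕ) : (-1) ^ m * kc (-m - 0) (b + 1) m =
    (m.factorial : ℝ) * (b.factorial : ℝ) / ((b + m).factorial : ℝ) := by
  rw [cf_top, Finset.prod_div_distrib, desc_prod]
  push_cast
  rw [asc_prod]
  field_simp

lemma qc_zero (m b i : ℕ) : qc m (b + 1) i 0 =
    ((m.factorial : ℝ) * (b.factorial : ℝ)) *
      ((i.factorial : ℝ) / ((b + 1 + m + i).factorial : ℝ)) := by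
  unfold qc
  rw [cf_zero, Finset.prod_div_distrib]
  have h1 := asc_prod 0 i
  have h2 := asc_prod (b + 1 + m) i
  have e1 : ∏ j ∈ Finset.range i, ((j:ℝ) + 1 - 0) = (i.factorial : ℝ) := by
    rw [← Finset.prod_range_add_one_eq_factorial]; push_cast
    apply Finset.prod_congr rfl; intros; ring
  have e2 : ∏ j ∈ Finset.range i, (((b + 1 : ℕ):ℝ) + m + 1 + j) =
    ((b + 1 + m + i).factorial : ℝ) / ((b + 1 + m).factorial : ℝ) := by
    rw [← h2]; push_cast; rfl
  rw [e1, e2]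
  have e3 : b + 1 + m = (b + m) + 1 := by ring
  have e4 : ((b + 1 + m).factorial : ℝ) = ((b:ℝ) + 1 + m) * ((b + m).factorial : ℝ) := by
    rw [e3, Nat.factorial_succ]; push_cast; ring
  rw [e4]
  push_cast
  have : (0:ℝ) < (b:ℝ) + 1 + m := by positivity
  field_simp

lemma pp_props (m b : ℕ) {N : ℝ} (hN : 1 ≤ N) : ∃ C : ℝ, 0 < C ∧ ∀ z : ℝ, 1 ≤ z →
    (∀ η ∈ Icc (0:ℝ) (1/2), |pp m (b + 1) η (z * (N / (N + η)))| ≤ C * z ^ m) ∧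
    (∀ η ∈ Icc (0:ℝ) (1/2), ∀ η' ∈ Icc (0:ℝ) (1/2),
      |pp m (b + 1) η (z * (N / (N + η))) - pp m (b + 1) η' (z * (N / (N + η')))|
        ≤ C * z ^ m * |η - η'|) ∧
    |pp m (b + 1) 0 (z * (N / (N + 0))) - (b.factorial : ℝ) / ((b + m).factorial : ℝ) * z ^ m|
      ≤ C * (z ^ m / z) := by
  choose M K hBL using fun k => BL.kc_ex m (b + 1) k
  have h1 : ∀ k, BL (fun η => (-1) ^ m * kc (-m - η) (b + 1) k * (N / (N + η)) ^ k) (M k * 1)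
      (M k * k + K k * 1) := fun k => (hBL k).mul ((BL.theta hN).pow_one k)
  have hP : ∀ η z, pp m (b + 1) η (z * (N / (N + η))) = ∑ k ∈ Finset.range (m + 1),
      ((-1) ^ m * kc (-m - η) (b + 1) k * (N / (N + η)) ^ k) * (z ^ k / (k.factorial : ℝ)) := by
    intro η z
    unfold pp
    apply Finset.sum_congr rfl
    intro k _
    rw [mul_pow]; ring
  set C1 := ∑ k ∈ Finset.range (m + 1), M k * 1
  set C2 := ∑ k ∈ Finset.range (m + 1), (M k * k + K k * 1)
  set C3 := ∑ k ∈ Finset.range m, M k * 1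
  have hC1 : 0 ≤ C1 := Finset.sum_nonneg (fun k _ => (h1 k).1)
  have hC2 : 0 ≤ C2 := Finset.sum_nonneg (fun k _ => (h1 k).2.1)
  have hC3 : 0 ≤ C3 := Finset.sum_nonneg (fun k _ => (h1 k).1)
  refine ⟨C1 + C2 + C3 + 1, by positivity, fun z hz => ?_⟩
  have hz0 : 0 < z := by linarith
  have hzm : 0 < z ^ m := by positivity
  refine ⟨fun η hη => ?_, fun η hη η' hη' => ?_, ?_⟩
  · rw [hP]
    refine (poly_bound (fun k _ => (h1 k).2.2.1 η hη) hz).trans ?_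
    gcongr; linarith
  · rw [hP, hP, ← Finset.sum_sub_distrib]
    have h2 := poly_bound (m := m) (fun k _ => (h1 k).2.2.2 η hη η' hη') hz
    rw [← Finset.sum_mul] at h2
    simp only [sub_mul] at h2
    refine h2.trans ?_
    have : C2 * |η - η'| * z ^ m = C2 * z ^ m * |η - η'| := by ring
    rw [this]
    gcongr; linarith
  · rw [hP, Finset.sum_range_succ, cf_zero]
    have h0 : (0:ℝ) ∈ Icc (0:ℝ) (1/2) := ⟨le_rfl, by norm_num⟩
    have h2 := poly_bound' (m := m) (fun k _ => (h1 k).2.2.1 0 h0) hz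
    have e : (m.factorial : ℝ) * (b.factorial : ℝ) / ((b + m).factorial : ℝ) * (N / (N + 0)) ^ m *
        (z ^ m / (m.factorial : ℝ)) = (b.factorial : ℝ) / ((b + m).factorial : ℝ) * z ^ m := by
      rw [add_zero, div_self (by linarith), one_pow]; field_simp
    rw [e, add_sub_cancel_right]
    refine h2.trans ?_
    gcongr; linarith

lemma qq_props (m b : ℕ) {N : ℝ} (hN : 1 ≤ N) : ∃ C c : ℝ, 0 < C ∧ 0 < c ∧ ∀ z : ℝ, 1 ≤ z →
    (∀ η ∈ Icc (0:ℝ) (1/2), ∀ η' ∈ Icc (0:ℝ) (1/2),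
      |qq m (b + 1) η (z * (N / (N + η))) - qq m (b + 1) η' (z * (N / (N + η')))|
        ≤ C * (z * Real.exp z) * |η - η'|) ∧
    (∀ η ∈ Icc (0:ℝ) (1/2), c * z ^ (m + (b + 1 + m) + 2) ≤ qq m (b + 1) η (z * (N / (N + η)))) ∧
    |qq m (b + 1) 0 (z * (N / (N + 0))) * z ^ (b + 1 + m) -
      ((m.factorial : ℝ) * (b.factorial : ℝ)) * Real.exp z| ≤ C * (Real.exp z / z) := by
  obtain ⟨M, K, hM, hK, hBL⟩ := qc_BL m (b + 1)
  obtain ⟨c, hc, hqc⟩ := qc_pos m (b + 1) (b + 1 + m + 1) (by omega)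
  obtain ⟨D, hD, hS⟩ := S_asymp m (b + 1 + m)
  set B := (m.factorial : ℝ) * (b.factorial : ℝ) with hB
  have hB0 : 0 < B := by positivity
  set V : ℕ → ℝ → ℝ := fun i η => qc m (b + 1) i η * (N / (N + η)) ^ (i + (m + 1)) with hV
  have h1 : ∀ i, BL (V i) (M * 1) (M * ((i + (m + 1) : ℕ) : ℝ) + (M * i + K) * 1) :=
    fun i => (hBL i).mul ((BL.theta hN).pow_one _)
  have hQ : ∀ η z, qq m (b + 1) η (z * (N / (N + η))) = ∑' i : ℕ,
      V i η * (z ^ (i + (m + 1)) / ((i + (m + 1)).factorial : ℝ)) := by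
    intro η z
    unfold qq
    congr 1; ext i
    rw [mul_pow]; simp only [hV]; ring
  have hsum : ∀ z : ℝ, 0 ≤ z → ∀ η ∈ Icc (0:ℝ) (1/2), Summable (fun i : ℕ =>
      V i η * (z ^ (i + (m + 1)) / ((i + (m + 1)).factorial : ℝ))) := by
    intro z hz η hη
    have h := ((summable_nat_add_iff (m + 1)).2 (hasSum_exp_real z).summable).mul_left M
    refine Summable.of_norm_bounded h (fun i => ?_)
    rw [Real.norm_eq_abs, abs_mul, abs_of_nonneg (a := _ / _) (by positivity)]
    have := (h1 i).2.2.1 η hη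
    rw [mul_one] at this
    gcongr
  have hVnn : ∀ i, ∀ η ∈ Icc (0:ℝ) (1/2), 0 ≤ V i η := by
    intro i η hη
    apply mul_nonneg (qc_nonneg _ _ _ (by omega) ⟨by linarith [hη.1], hη.2⟩)
    have : 0 ≤ N + η := by linarith [hη.1]
    positivity
  set L := 2 * M + K with hL
  have hL0 : 0 ≤ L := by positivity
  refine ⟨2 * L + B * D, c * (1/2) ^ (m + (b + 1 + m) + 2) /
    ((m + (b + 1 + m) + 2).factorial : ℝ), by positivity, by positivity, fun z hz => ?_⟩
  have hz0 : 0 < z := by linarith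
  have hE := Real.exp_pos z
  refine ⟨fun η hη η' hη' => ?_, fun η hη => ?_, ?_⟩
  · rw [hQ, hQ, ← (hsum z hz0.le η hη).tsum_sub (hsum z hz0.le η' hη')]
    have hk := hasSum_k1 z
    have hk' := ((summable_nat_add_iff (m + 1)).2 hk.summable)
    have hle : ∑' i : ℕ, (((i + (m + 1) : ℕ) : ℝ) + 1) *
        (z ^ (i + (m + 1)) / ((i + (m + 1)).factorial : ℝ)) ≤ (z + 1) * Real.exp z := by
      rw [← hk.tsum_eq, ← hk.summable.sum_add_tsum_nat_add (m + 1)]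
      have : 0 ≤ ∑ k ∈ Finset.range (m + 1), ((k:ℝ) + 1) * (z ^ k / (k.factorial : ℝ)) := by
        apply Finset.sum_nonneg; intros; positivity
      linarith
    have h3 := tsum_of_norm_bounded (hk'.hasSum.mul_left (L * |η - η'|))
      (f := fun i => V i η * (z ^ (i + (m + 1)) / ((i + (m + 1)).factorial : ℝ)) -
        V i η' * (z ^ (i + (m + 1)) / ((i + (m + 1)).factorial : ℝ))) (fun i => by
        rw [Real.norm_eq_abs, ← sub_mul, abs_mul, abs_of_nonneg (a := _ / _) (by positivity),
          ← mul_assoc]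
        gcongr
        refine ((h1 i).2.2.2 η hη η' hη').trans ?_
        have : M * ((i + (m + 1) : ℕ) : ℝ) + (M * i + K) * 1 ≤ L * (((i + (m + 1) : ℕ) : ℝ) + 1) := by
          rw [hL]
          push_cast
          have h1 : 0 ≤ M * (m:ℝ) := by positivity
          have h2 : 0 ≤ K * (m:ℝ) := by positivity
          have h3 : 0 ≤ K * (i:ℝ) := by positivity
          nlinarith
        calc _ ≤ L * (((i + (m + 1) : ℕ) : ℝ) + 1) * |η - η'| := by gcongr
          _ = _ := by ring)
    rw [Real.norm_eq_abs] at h3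
    refine h3.trans ?_
    have h4 : (z + 1) * Real.exp z ≤ 2 * (z * Real.exp z) := by nlinarith
    calc _ ≤ L * |η - η'| * (2 * (z * Real.exp z)) := by gcongr; exact hle.trans h4
      _ = (2 * L) * (z * Real.exp z) * |η - η'| := by ring
      _ ≤ _ := by
        gcongr
        have : 0 < B * D := by positivity
        linarith
  · rw [hQ]
    have h3 := (hsum z hz0.le η hη).le_tsum (b + 1 + m + 1) (fun j _ =>
      mul_nonneg (hVnn j η hη) (by positivity))
    refine le_trans ?_ h3
    have e : b + 1 + m + 1 + (m + 1) = m + (b + 1 + m) + 2 := by ring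
    simp only [hV]
    rw [e]
    have h4 := hqc η ⟨by linarith [hη.1], hη.2⟩
    have h5 : (1/2 : ℝ) ≤ N / (N + η) := by
      have := hη.1; have := hη.2
      rw [le_div_iff₀ (by linarith)]; linarith
    have h6 := pow_le_pow_left₀ (by norm_num) h5 (m + (b + 1 + m) + 2)
    have h7 := mul_le_mul h4 h6 (by positivity) (hc.le.trans h4)
    calc _ = c * (1/2) ^ (m + (b + 1 + m) + 2) * (z ^ (m + (b + 1 + m) + 2) /
        ((m + (b + 1 + m) + 2).factorial : ℝ)) := by ring
      _ ≤ _ := by gcongr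
  · rw [hQ]
    have e : ∀ i, V i 0 = B * ((i.factorial : ℝ) / ((b + 1 + m + i).factorial : ℝ)) := by
      intro i
      simp only [hV]
      rw [qc_zero, add_zero, div_self (by linarith), one_pow, mul_one]
    simp only [e, mul_assoc B]
    rw [tsum_mul_left, mul_assoc B, ← mul_sub, abs_mul, abs_of_pos hB0]
    have := mul_le_mul_of_nonneg_left (hS z hz) hB0.le
    refine this.trans ?_
    rw [← mul_assoc]
    gcongr
    linarith

lemma level (m b : ℕ) {N : ℝ} (hN : 1 ≤ N) : ∃ z1 D : ℝ, 0 < z1 ∧ 0 < D ∧ ∀ z, z1 ≤ z →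
    ∃ η ∈ Ioo (0:ℝ) (1/2), kM (-m - η) (b + 1) (z * (N / (N + η))) = 0 ∧
      |η - 1 / ((m.factorial : ℝ) * ((b + m).factorial : ℝ)) *
        (z ^ (2 * m + b + 1) * Real.exp (-z))| ≤ D / z * (z ^ (2 * m + b + 1) * Real.exp (-z)) ∧
      ∀ η' ∈ Icc (-(1/2):ℝ) (1/2), kM (-m - η') (b + 1) (z * (N / (N + η'))) = 0 → η' = η := by
  obtain ⟨C1, hC1, hp⟩ := pp_props m b hN
  obtain ⟨C2, c, hC2, hc, hq⟩ := qq_props m b hN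
  obtain ⟨w0, hw0, hpos⟩ := pp_pos m (b + 1) (by omega)
  obtain ⟨w1, hw1, hneg⟩ := no_zero_neg m (b + 1) (by omega)
  have hB0 : 0 < (m.factorial : ℝ) * (b.factorial : ℝ) := by positivity
  have hkey : ∀ η z : ℝ, kM (-m - η) (b + 1) (z * (N / (N + η))) = 0 ↔
      pp m (b + 1) η (z * (N / (N + η))) = η * qq m (b + 1) η (z * (N / (N + η))) := by
    intro η z
    have h := kM_split m (b + 1) (by omega) η (z * (N / (N + η)))
    have h1 : ((-1:ℝ)) ^ m ≠ 0 := by simp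
    constructor
    · intro h2; rw [h2, mul_zero] at h; linarith
    · intro h2
      rw [h2, sub_self] at h
      exact (mul_eq_zero.1 h).resolve_left h1
  have hth : ∀ η ∈ Icc (0:ℝ) (1/2), (1/2 : ℝ) ≤ N / (N + η) := by
    intro η hη
    have := hη.1; have := hη.2
    rw [le_div_iff₀ (by linarith)]; linarith
  obtain ⟨z1, D, hz1, hD, H⟩ := abstract_root (fun η z => pp m (b + 1) η (z * (N / (N + η))))
    (fun η z => qq m (b + 1) η (z * (N / (N + η)))) m (b + 1 + m)
    ((b.factorial : ℝ) / ((b + m).factorial : ℝ)) ((m.factorial : ℝ) * (b.factorial : ℝ))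
    (C1 + C2) c (2 * w0) hB0 (by positivity) hc
    (fun z hz η hη => by
      refine ⟨hpos η ⟨by linarith [hη.1], hη.2⟩ _ ?_, ?_⟩
      · have := hth η hη; nlinarith
      · refine (le_abs_self _).trans (((hp z (by linarith)).1 η hη).trans ?_)
        have : 0 ≤ z := by linarith
        gcongr; linarith)
    (fun z hz η hη η' hη' => by
      refine ((hp z (by linarith)).2.1 η hη η' hη').trans ?_
      have : 0 ≤ z := by linarith
      gcongr; linarith)
    (fun z hz η hη η' hη' => by
      refine ((hq z (by linarith)).1 η hη η' hη').trans ?_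
      have : 0 ≤ z := by linarith
      gcongr; linarith)
    (fun z hz η hη => (hq z (by linarith)).2.1 η hη)
    (fun z hz => by
      refine ((hq z (by linarith)).2.2).trans ?_
      have : 0 ≤ z := by linarith
      gcongr; linarith)
    (fun z hz => by
      refine ((hp z (by linarith)).2.2).trans ?_
      have : 0 ≤ z := by linarith
      gcongr; linarith)
  refine ⟨max z1 w1, D, lt_max_of_lt_left hz1, hD, fun z hz => ?_⟩
  obtain ⟨η, hη, h1, h2, h3⟩ := H z ((le_max_left _ _).trans hz)
  refine ⟨η, hη, (hkey η z).2 h1, ?_, fun η' hη' h4 => ?_⟩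
  · have e : m + (b + 1 + m) = 2 * m + b + 1 := by ring
    rw [e] at h2
    have e2 : (b.factorial : ℝ) / ((b + m).factorial : ℝ) / ((m.factorial : ℝ) * (b.factorial : ℝ))
      = 1 / ((m.factorial : ℝ) * ((b + m).factorial : ℝ)) := by field_simp
    rwa [e2] at h2
  · rcases le_total 0 η' with h5 | h5
    · exact h3 η' ⟨h5, hη'.2⟩ ((hkey η' z).1 h4)
    · exfalso
      refine hneg η' ⟨hη'.1, h5⟩ _ ?_ h4
      refine ((le_max_right _ _).trans hz).trans ?_
      have h6 : 1 ≤ N / (N + η') := by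
        rw [le_div_iff₀ (by linarith [hη'.1])]; linarith
      have h7 : 0 ≤ z := by linarith [(le_max_right z1 w1).trans hz]
      nlinarith

lemma kM_pos_of {a : ℝ} (ha : 0 ≤ a) (b : ℕ) {w : ℝ} (hw : 0 ≤ w) : 0 < kM a (b + 1) w := by
  have hs : Summable (fun k : ℕ => kc a (b + 1) k * (w ^ k / (k.factorial : ℝ))) :=
    egf_summable (kc_bound _ (by omega)) w
  have h : kM a (b + 1) w = ∑' k : ℕ, kc a (b + 1) k * (w ^ k / (k.factorial : ℝ)) := rfl
  rw [h]
  have hk : ∀ k, 0 ≤ kc a (b + 1) k := by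
    intro k; unfold kc; apply Finset.prod_nonneg; intros; positivity
  refine lt_of_lt_of_le ?_ (hs.le_tsum 0 (fun k _ => mul_nonneg (hk k) (by positivity)))
  simp [kc]

lemma IsNthEig.unique {S : Set ℝ} {m : ℕ} {a b : ℝ} (ha : IsNthEig S m a) (hb : IsNthEig S m b) :
    a = b := by
  have key : ∀ a b, IsNthEig S m a → IsNthEig S m b → ¬ a < b := by
    intro a b ha hb hab
    have : {x ∈ S | x < a}.ncard < {x ∈ S | x < b}.ncard := by
      apply Set.ncard_lt_ncard _ hb.2.1
      refine ⟨fun x hx => ⟨hx.1, hx.2.trans hab⟩, fun h => ?_⟩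
      exact lt_irrefl a (h ⟨ha.1, hab⟩).2
    rw [ha.2.2, hb.2.2] at this
    exact lt_irrefl _ this
  rcases lt_trichotomy a b with h | h | h
  · exact absurd h (key a b ha hb)
  · exact h
  · exact absurd h (key b a hb ha)

lemma windows (ℓ m : ℕ) : ∃ X0 D : ℝ, 0 < X0 ∧ 0 < D ∧ ∀ X, X0 ≤ X → ∃ η : ℕ → ℝ,
    (∀ j ≤ m, η j ∈ Ioo (0:ℝ) (1/2)) ∧
    (∀ j ≤ m, kM (ℓ + 1 - ((j:ℝ) + ℓ + 1 + η j)) (2 * ℓ + 2) (X / ((j:ℝ) + ℓ + 1 + η j)) = 0) ∧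
    (∀ ν : ℝ, 0 < ν → ν ≤ (m:ℝ) + ℓ + 1 + 1/2 → kM (ℓ + 1 - ν) (2 * ℓ + 2) (X / ν) = 0 →
      ∃ j ≤ m, ν = (j:ℝ) + ℓ + 1 + η j) ∧
    ∀ z, z = X / ((m:ℝ) + ℓ + 1) →
    |η m - 1 / ((m.factorial : ℝ) * ((2 * ℓ + 1 + m).factorial : ℝ)) *
        (z ^ (2 * m + (2 * ℓ + 1) + 1) * Real.exp (-z))| ≤
          D / z * (z ^ (2 * m + (2 * ℓ + 1) + 1) * Real.exp (-z)) := by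
  have hN : ∀ j : ℕ, (1:ℝ) ≤ (j:ℝ) + ℓ + 1 := fun j => by
    have : (0:ℝ) ≤ (j:ℝ) + ℓ := by positivity
    linarith
  choose z1 D hz1 hD H using fun j : ℕ => level j (2 * ℓ + 1) (hN j)
  refine ⟨∑ j ∈ Finset.range (m + 1), ((j:ℝ) + ℓ + 1) * z1 j, D m, ?_, hD m, fun X hX => ?_⟩
  · apply Finset.sum_pos
    · intro j _; exact mul_pos (by linarith [hN j]) (hz1 j)
    · simp
  have hz : ∀ j ≤ m, z1 j ≤ X / ((j:ℝ) + ℓ + 1) := by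
    intro j hj
    rw [le_div_iff₀ (by linarith [hN j]), mul_comm]
    refine le_trans ?_ hX
    exact Finset.single_le_sum (f := fun j : ℕ => ((j:ℝ) + ℓ + 1) * z1 j)
      (fun i _ => (mul_pos (by linarith [hN i]) (hz1 i)).le) (Finset.mem_range.2 (by omega))
  have hX0 : 0 < X := by
    have h1 := (hz1 0).trans_le (hz 0 (by omega))
    by_contra h
    have : X / (((0:ℕ):ℝ) + ℓ + 1) ≤ 0 := div_nonpos_of_nonpos_of_nonneg (by linarith) (by positivity)
    linarith
  have H2 := fun (j : ℕ) (hj : j ≤ m) => H j _ (hz j hj)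
  choose! η hη using H2
  have ea : ∀ (j : ℕ) (e : ℝ), -(j:ℝ) - e = ℓ + 1 - ((j:ℝ) + ℓ + 1 + e) := by intros; ring
  have ew : ∀ (j : ℕ) (e : ℝ), X / ((j:ℝ) + ℓ + 1) * (((j:ℝ) + ℓ + 1) / ((j:ℝ) + ℓ + 1 + e)) =
      X / ((j:ℝ) + ℓ + 1 + e) := by
    intro j e
    have := hN j
    rw [div_mul_div_cancel₀ (by linarith)]
  refine ⟨η, fun j hj => (hη j hj).1, fun j hj => ?_, fun ν hν hνm h0 => ?_, ?_⟩
  · have := (hη j hj).2.1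
    rwa [ea, ew] at this
  · rcases le_or_gt ν ((ℓ:ℝ) + 1/2) with h | h
    · exfalso
      have := kM_pos_of (a := ℓ + 1 - ν) (by linarith) (2 * ℓ + 1) (w := X / ν) (by positivity)
      exact this.ne h0.symm
    · obtain ⟨j, hj1, hj2⟩ : ∃ j : ℕ, (j:ℝ) < ν - (ℓ + 1/2) ∧ ν - (ℓ + 1/2) ≤ j + 1 := by
        have hc : 0 < ⌈ν - (ℓ + 1/2)⌉₊ := Nat.ceil_pos.2 (by linarith)
        obtain ⟨j, hj⟩ := Nat.exists_eq_succ_of_ne_zero hc.ne'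
        refine ⟨j, Nat.lt_ceil.1 (by omega), ?_⟩
        have := Nat.le_ceil (ν - ((ℓ:ℝ) + 1/2))
        rw [hj] at this
        push_cast at this
        exact this
      have hjm : j ≤ m := by
        have : (j:ℝ) < m + 1 := by linarith
        have : j < m + 1 := by exact_mod_cast this
        omega
      refine ⟨j, hjm, ?_⟩
      have := (hη j hjm).2.2.2 (ν - ((j:ℝ) + ℓ + 1)) ⟨by linarith, by linarith⟩ (by
        rw [ea, ew]
        have e : (j:ℝ) + ℓ + 1 + (ν - ((j:ℝ) + ℓ + 1)) = ν := by ring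
        rw [e]; exact h0)
      linarith
  · intro z hz'; rw [hz']
    exact (hη m le_rfl).2.2.1

lemma energy_lt {Z h ν ν' : ℝ} (hZ : 0 < Z) (hh : 0 < h) (hν : 0 < ν) (hν' : 0 < ν') :
    -(Z ^ 2 / (4 * ν ^ 2 * h ^ 2)) < -(Z ^ 2 / (4 * ν' ^ 2 * h ^ 2)) ↔ ν < ν' := by
  rw [neg_lt_neg_iff, div_lt_div_iff_of_pos_left (by positivity) (by positivity) (by positivity)]
  rw [mul_lt_mul_iff_left₀ (by positivity), mul_lt_mul_iff_right₀ (by norm_num),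
    pow_lt_pow_iff_left₀ hν.le hν'.le (by norm_num)]

lemma energy_param {Z h E : ℝ} (hZ : 0 < Z) (hh : 0 < h) (hE : E < 0) :
    ∃ ν : ℝ, 0 < ν ∧ E = -(Z ^ 2 / (4 * ν ^ 2 * h ^ 2)) := by
  have h1 : 0 < -E := by linarith
  refine ⟨Z / (2 * h * Real.sqrt (-E)), by positivity, ?_⟩
  rw [div_pow, mul_pow, Real.sq_sqrt h1.le]
  have : E ≠ 0 := hE.ne
  field_simp
  norm_num

lemma nth_eig {Z : ℝ} (hZ : 0 < Z) (ℓ m : ℕ) {h R : ℝ} (hh : 0 < h) (hR : 0 < R) (η : ℕ → ℝ)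
    (h1 : ∀ j ≤ m, η j ∈ Ioo (0:ℝ) (1/2))
    (h2 : ∀ j ≤ m, kM (ℓ + 1 - ((j:ℝ) + ℓ + 1 + η j)) (2 * ℓ + 2)
      (Z * R / h ^ 2 / ((j:ℝ) + ℓ + 1 + η j)) = 0)
    (h3 : ∀ ν : ℝ, 0 < ν → ν ≤ (m:ℝ) + ℓ + 1 + 1/2 →
      kM (ℓ + 1 - ν) (2 * ℓ + 2) (Z * R / h ^ 2 / ν) = 0 → ∃ j ≤ m, ν = (j:ℝ) + ℓ + 1 + η j) :
    IsNthEig {E | IsEigCoulombConfined Z ℓ h R E} m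
      (-(Z ^ 2 / (4 * ((m:ℝ) + ℓ + 1 + η m) ^ 2 * h ^ 2))) := by
  set νf : ℕ → ℝ := fun j => (j:ℝ) + ℓ + 1 + η j with hνf
  have hpos : ∀ j ≤ m, 0 < νf j := by
    intro j hj
    have := (h1 j hj).1
    simp only [hνf]; positivity
  have hmono : ∀ i ≤ m, ∀ j ≤ m, i < j → νf i < νf j := by
    intro i hi j hj hij
    have a1 := (h1 i hi).2
    have a2 := (h1 j hj).1
    have : (i:ℝ) + 1 ≤ j := by exact_mod_cast hij
    simp only [hνf]; linarith
  set Ef : ℝ → ℝ := fun ν => -(Z ^ 2 / (4 * ν ^ 2 * h ^ 2)) with hEf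
  have hset : {x ∈ {E | IsEigCoulombConfined Z ℓ h R E} | x < Ef (νf m)} =
      (((Finset.range m).image (fun j => Ef (νf j)) : Finset ℝ) : Set ℝ) := by
    ext E
    simp only [Set.mem_setOf_eq, Finset.coe_image, Set.mem_image, Finset.coe_range, Set.mem_Iio]
    constructor
    · rintro ⟨hE, hlt⟩
      obtain ⟨ν, hν, rfl⟩ := energy_param hZ hh hE.1
      have hk := (eig_iff hZ ℓ hh hR hν).1 hE
      have hlt2 := (energy_lt hZ hh hν (hpos m le_rfl)).1 hlt
      obtain ⟨j, hj, rfl⟩ := h3 ν hν (by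
        have := (h1 m le_rfl).2
        simp only [hνf] at hlt2; linarith) hk
      refine ⟨j, ?_, rfl⟩
      rcases hj.lt_or_eq with h | h
      · exact h
      · subst h; exact absurd hlt2 (lt_irrefl _)
    · rintro ⟨j, hj, rfl⟩
      exact ⟨(eig_iff hZ ℓ hh hR (hpos j hj.le)).2 (h2 j hj.le),
        (energy_lt hZ hh (hpos j hj.le) (hpos m le_rfl)).2 (hmono j hj.le m le_rfl hj)⟩
  refine ⟨(eig_iff hZ ℓ hh hR (hpos m le_rfl)).2 (h2 m le_rfl), ?_, ?_⟩
  · change {x ∈ {E | IsEigCoulombConfined Z ℓ h R E} | x < Ef (νf m)}.Finite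
    rw [hset]; exact Finset.finite_toSet _
  · change {x ∈ {E | IsEigCoulombConfined Z ℓ h R E} | x < Ef (νf m)}.ncard = m
    rw [hset, Set.ncard_coe_finset, Finset.card_image_of_injOn, Finset.card_range]
    intro i hi j hj hij
    simp only [Finset.coe_range, Set.mem_Iio] at hi hj
    rcases lt_trichotomy i j with h | h | h
    · exact absurd hij ((energy_lt hZ hh (hpos i hi.le) (hpos j hj.le)).2
        (hmono i hi.le j hj.le h)).ne
    · exact h
    · exact absurd hij ((energy_lt hZ hh (hpos j hj.le) (hpos i hi.le)).2
        (hmono j hj.le i hi.le h)).ne'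

lemma final_est {N D F G κ η z u : ℝ} (hN : 1 ≤ N) (hD : 0 < D) (hF : 1 ≤ F) (hκ : 0 ≤ κ)
    (hη : η ∈ Ioo (0:ℝ) (1/2)) (hz : 1 ≤ z) (hu : 0 < u) (huG : u ≤ G / z)
    (h : |η - 1 / F * u| ≤ D / z * u) :
    |κ * (η * (N * (2 * N + η) / (2 * (N + η) ^ 2))) - κ * (1 / F * u)| ≤
      (D * F + 3 * (1 + D * F) ^ 2 * G) / z * (κ * (1 / F * u)) := by
  have hη0 := hη.1
  have hF0 : 0 < F := by linarith
  have hz0 : 0 < z := by linarith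
  have hN0 : 0 < N := by linarith
  set t := 1 / F * u with ht
  have ht0 : 0 < t := by positivity
  have hut : u = F * t := by rw [ht]; field_simp
  have htu : t ≤ G / z := by
    have : t ≤ u := by rw [hut]; nlinarith
    linarith
  have h1 : |η - t| ≤ D * F / z * t := by
    rw [hut] at h
    refine h.trans (le_of_eq ?_); ring
  have h2 : η ≤ (1 + D * F) * t := by
    have : D * F / z ≤ D * F := div_le_self (by positivity) hz
    have := (abs_le.1 h1).2
    nlinarith
  have h3 : η ^ 2 ≤ (1 + D * F) ^ 2 * (G / z) * t := by
    calc η ^ 2 ≤ ((1 + D * F) * t) ^ 2 := by gcongr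
      _ = (1 + D * F) ^ 2 * t * t := by ring
      _ ≤ (1 + D * F) ^ 2 * (G / z) * t := by gcongr
  have h4 : |N * (2 * N + η) / (2 * (N + η) ^ 2) - 1| ≤ 3 * η := by
    have e : N * (2 * N + η) / (2 * (N + η) ^ 2) - 1 = -((3 * N * η + 2 * η ^ 2) / (2 * (N + η) ^ 2)) := by
      field_simp; ring
    rw [e, abs_neg, abs_of_nonneg (by positivity), div_le_iff₀ (by positivity)]
    have : N * η ≤ (N + η) ^ 2 * η := by
      have : N ≤ (N + η) ^ 2 := by nlinarith
      gcongr
    have : η * η ≤ (N + η) ^ 2 * η := by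
      have : η ≤ (N + η) ^ 2 := by nlinarith
      gcongr
    nlinarith
  rw [← mul_sub, abs_mul, abs_of_nonneg hκ]
  have e : η * (N * (2 * N + η) / (2 * (N + η) ^ 2)) - t =
    (η - t) + η * (N * (2 * N + η) / (2 * (N + η) ^ 2) - 1) := by ring
  have h5 : |η * (N * (2 * N + η) / (2 * (N + η) ^ 2)) - t| ≤ D * F / z * t + 3 * η ^ 2 := by
    rw [e]
    refine (abs_add_le _ _).trans ?_
    rw [abs_mul, abs_of_pos hη0]
    have := mul_le_mul_of_nonneg_left h4 hη0.le
    linarith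
  calc _ ≤ κ * (D * F / z * t + 3 * ((1 + D * F) ^ 2 * (G / z) * t)) := by gcongr; linarith
    _ = _ := by ring

lemma T_eq {Z h R : ℝ} (hh : 0 < h) (n : ℕ) (hn : 1 ≤ n) (F1 F2 : ℝ) (hF1 : 0 < F1) (hF2 : 0 < F2) :
    2 ^ (2 * n + 1) * h ^ (-4 * (n : ℝ) - 2) * R ^ (2 * n) / ((n : ℝ) ^ (2 * n + 3) * F1 * F2) *
      (Z / 2) ^ (2 * n + 2) * Real.exp (-Z * R / (n * h ^ 2)) =
    Z ^ 2 / (2 * h ^ 2 * n ^ 3) * (1 / (F1 * F2) *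
      ((Z * R / h ^ 2 / n) ^ (2 * n) * Real.exp (-(Z * R / h ^ 2 / n)))) := by
  have hn0 : (0:ℝ) < n := by exact_mod_cast hn
  have e1 : h ^ (-4 * (n : ℝ) - 2) = (h ^ (4 * n + 2))⁻¹ := by
    rw [← Real.rpow_natCast, ← Real.rpow_neg hh.le]
    congr 1; push_cast; ring
  have e2 : -Z * R / (n * h ^ 2) = -(Z * R / h ^ 2 / n) := by field_simp
  rw [e1, e2]
  have e3 : (Z / 2) ^ (2 * n + 2) = Z ^ (2 * n) * Z ^ 2 / (2 ^ (2 * n + 1) * 2) := by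
    rw [div_pow, pow_add Z, pow_add, pow_add]; norm_num; ring
  have e4 : h ^ (4 * n + 2) = h ^ (2 * (2 * n)) * h ^ 2 := by rw [← pow_add]; congr 1; ring
  rw [e3, e4, div_pow, div_pow, mul_pow, ← pow_mul, pow_add (n:ℝ) (2 * n) 3]
  field_simp

theorem confined_hydrogen_eigenvalue_shift
    (Z : ℝ) (hZ : 0 < Z) (ℓ n : ℕ) (hn : ℓ + 1 ≤ n)
    -- `En h R` is the eigenvalue `E_n(R)` of `H_R(ℓ;h)`, i.e. the `(n-ℓ-1)`-th negative
    -- eigenvalue in increasing order, assumed to exist for `h²/R` small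
    (δ₀ : ℝ) (hδ₀ : 0 < δ₀)
    (En : ℝ → ℝ → ℝ)
    (hEn : ∀ h R : ℝ, 0 < h → 0 < R → h ^ 2 / R < δ₀ →
      IsNthEig {E | IsEigCoulombConfined Z ℓ h R E} (n - ℓ - 1) (En h R)) :
    ∃ C δ : ℝ, 0 < C ∧ 0 < δ ∧ ∀ h R : ℝ, 0 < h → 0 < R → h ^ 2 / R < δ →
      |En h R + Z ^ 2 / (4 * n ^ 2 * h ^ 2) -
          2 ^ (2 * n + 1) * h ^ (-4 * (n : ℝ) - 2) * R ^ (2 * n) /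
            ((n : ℝ) ^ (2 * n + 3) * (Nat.factorial (n - ℓ - 1) : ℝ) *
              (Nat.factorial (n + ℓ) : ℝ)) *
            (Z / 2) ^ (2 * n + 2) * Real.exp (-Z * R / (n * h ^ 2))| ≤
        C * (h ^ 2 / R) *
          (2 ^ (2 * n + 1) * h ^ (-4 * (n : ℝ) - 2) * R ^ (2 * n) /
            ((n : ℝ) ^ (2 * n + 3) * (Nat.factorial (n - ℓ - 1) : ℝ) *
              (Nat.factorial (n + ℓ) : ℝ)) *
            (Z / 2) ^ (2 * n + 2) * Real.exp (-Z * R / (n * h ^ 2))) := by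
  obtain ⟨m, rfl⟩ : ∃ m, n = m + ℓ + 1 := ⟨n - ℓ - 1, by omega⟩
  have em : m + ℓ + 1 - ℓ - 1 = m := by omega
  rw [em] at hEn ⊢
  obtain ⟨X0, D, hX0, hD, H⟩ := windows ℓ m
  set n := m + ℓ + 1 with hndef
  have hnc : (n:ℝ) = (m:ℝ) + ℓ + 1 := by rw [hndef]; push_cast; ring
  have hn1 : (1:ℝ) ≤ n := by exact_mod_cast (by omega : 1 ≤ n)
  have hn0 : (0:ℝ) < n := by linarith
  obtain ⟨F, hF⟩ : ∃ F, F = (m.factorial : ℝ) * ((n + ℓ).factorial : ℝ) := ⟨_, rfl⟩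
  have hF1 : 1 ≤ F := by
    have : 1 ≤ m.factorial * (n + ℓ).factorial := Nat.mul_pos (Nat.factorial_pos _) (Nat.factorial_pos _)
    rw [hF]; exact_mod_cast this
  obtain ⟨G, hG⟩ : ∃ G, G = ((2 * n + 1).factorial : ℝ) := ⟨_, rfl⟩
  have hG0 : 0 < G := by rw [hG]; positivity
  obtain ⟨K, hK⟩ : ∃ K, K = D * F + 3 * (1 + D * F) ^ 2 * G := ⟨_, rfl⟩
  have hF0 : 0 < F := by linarith
  have hK0 : 0 < K := by rw [hK]; positivity
  refine ⟨K * n / Z, min δ₀ (min (Z / X0) (Z / n)), by positivity,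
    lt_min hδ₀ (lt_min (by positivity) (by positivity)), fun h R hh hR hlt => ?_⟩
  have hlt1 : h ^ 2 / R < δ₀ := hlt.trans_le (min_le_left _ _)
  have hlt2 : h ^ 2 / R < Z / X0 := hlt.trans_le ((min_le_right _ _).trans (min_le_left _ _))
  have hlt3 : h ^ 2 / R < Z / n := hlt.trans_le ((min_le_right _ _).trans (min_le_right _ _))
  have hX : X0 ≤ Z * R / h ^ 2 := by
    rw [div_lt_div_iff₀ hR hX0] at hlt2
    rw [le_div_iff₀ (by positivity)]; linarith
  have hz1 : 1 ≤ Z * R / h ^ 2 / n := by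
    rw [div_lt_div_iff₀ hR hn0] at hlt3
    rw [le_div_iff₀ hn0, le_div_iff₀ (by positivity)]; linarith
  obtain ⟨η, h1, h2, h3, h4⟩ := H _ hX
  have hE := (hEn h R hh hR hlt1).unique (nth_eig hZ ℓ m hh hR η h1 h2 h3)
  rw [T_eq hh n (by omega) _ _ (by positivity) (by positivity), ← hF]
  obtain ⟨z, hz⟩ : ∃ z, z = Z * R / h ^ 2 / n := ⟨_, rfl⟩
  rw [← hz] at hz1 ⊢
  have hz0 : 0 < z := by linarith
  have h4' := h4 z (by rw [hz, hnc])
  have e1 : 2 * m + (2 * ℓ + 1) + 1 = 2 * n := by omega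
  have e2 : 2 * ℓ + 1 + m = n + ℓ := by omega
  rw [e1, e2, ← hF] at h4'
  have hu : z ^ (2 * n) * Real.exp (-z) ≤ G / z := by
    have := Real.pow_div_factorial_le_exp z hz0.le (2 * n + 1)
    rw [div_le_iff₀ (by positivity), ← hG] at this
    rw [le_div_iff₀ hz0, Real.exp_neg, mul_assoc, mul_comm _ z, ← mul_assoc, ← pow_succ,
      ← div_eq_mul_inv, div_le_iff₀ (Real.exp_pos z)]
    linarith
  have hfin := final_est (κ := Z ^ 2 / (2 * h ^ 2 * n ^ 3)) hn1 hD hF1 (by positivity)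
    (h1 m le_rfl) hz1 (by positivity) hu h4'
  have hη0 := (h1 m le_rfl).1
  have e3 : En h R + Z ^ 2 / (4 * n ^ 2 * h ^ 2) =
      Z ^ 2 / (2 * h ^ 2 * n ^ 3) * (η m * (n * (2 * n + η m) / (2 * (n + η m) ^ 2))) := by
    rw [hE, ← hnc]
    have : 0 < (n:ℝ) + η m := by linarith
    field_simp
    ring
  have e4 : K * n / Z * (h ^ 2 / R) = K / z := by
    rw [hz]; field_simp
  rw [e3, e4, hK]
  exact hfin
end

section
/- Let ν > 0, h > 0, 0 < L ≤ ∞, and let Z ⊆ ℝ be a connected open interval. Let B : [0, L) × Z → ℝ be jointly C^∞. Then there exists a jointly C^∞ function w : [0, L) × Z → ℝ with w(0, z) = 1 and ∂ₓw(0, z) = 0 for all z ∈ Z, such that for each z ∈ Z the function u(x) = x^{1/2+ν} w(x, z) satisfies −h²u'' + h²(ν² − 1/4)x⁻² u + B(x, z) u = 0 on (0, L). -/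
open MeasureTheory Set Filter
namespace Frob

noncomputable def sig (t : ℝ) : ℝ × ℝ →L[ℝ] ℝ × ℝ :=
  (t • ContinuousLinearMap.fst ℝ ℝ ℝ).prod (ContinuousLinearMap.snd ℝ ℝ ℝ)

lemma sig_apply (t : ℝ) (p : ℝ × ℝ) : sig t p = (t * p.1, p.2) := rfl

lemma sig_norm (t : unitInterval) (p : ℝ × ℝ) : ‖sig t p‖ ≤ ‖p‖ := by
  rw [sig_apply, Prod.norm_def, Prod.norm_def]
  apply max_le_max _ le_rfl
  rw [norm_mul]
  have h1 : ‖(t:ℝ)‖ ≤ 1 := by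
    rw [Real.norm_of_nonneg t.2.1]; exact t.2.2
  exact mul_le_of_le_one_left (norm_nonneg _) h1

lemma sig_cont : Continuous (fun q : (ℝ × ℝ) × unitInterval => sig q.2 q.1) := by
  simp only [sig_apply]; fun_prop

set_option linter.unusedSectionVars false

variable {F : Type} [NormedAddCommGroup F] [NormedSpace ℝ F]

open Classical in
noncomputable def Phi (f : ℝ × ℝ → F) (p : ℝ × ℝ) : C(unitInterval, F) :=
  if h : Continuous (fun t : unitInterval => f (sig t p)) then ⟨_, h⟩ else 0

lemma Phi_apply {S : Set (ℝ × ℝ)} (hS : ∀ t : unitInterval, ∀ p ∈ S, sig t p ∈ S)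
    {f : ℝ × ℝ → F} (hf : ContinuousOn f S) {p : ℝ × ℝ} (hp : p ∈ S) (t : unitInterval) :
    Phi f p t = f (sig t p) := by
  have h : Continuous (fun t : unitInterval => f (sig t p)) := by
    apply hf.comp_continuous
    · exact sig_cont.comp (continuous_const.prodMk continuous_id)
    · exact fun t => hS t p hp
  unfold Phi
  rw [dif_pos h]; rfl

lemma Phi_continuousOn {S : Set (ℝ × ℝ)} (hS : ∀ t : unitInterval, ∀ p ∈ S, sig t p ∈ S)
    {f : ℝ × ℝ → F} (hf : ContinuousOn f S) : ContinuousOn (Phi f) S := by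
  rw [continuousOn_iff_continuous_domRestrict]
  apply ContinuousMap.continuous_of_continuous_uncurry
  have : (Function.uncurry fun (x : S) (y : unitInterval) => (S.domRestrict (Phi f) x) y)
      = fun q : S × unitInterval => f (sig q.2 q.1) := by
    ext q
    exact Phi_apply hS hf q.1.2 q.2
  rw [this]
  apply hf.comp_continuous
  · exact sig_cont.comp ((continuous_subtype_val.comp continuous_fst).prodMk continuous_snd)
  · exact fun q => hS q.2 q.1 q.1.2

noncomputable def Lam : C(unitInterval, ℝ × ℝ →L[ℝ] F) →L[ℝ] (ℝ × ℝ →L[ℝ] C(unitInterval, F)) :=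
  LinearMap.mkContinuous₂ (LinearMap.mk₂ ℝ
    (fun (A : C(unitInterval, ℝ × ℝ →L[ℝ] F)) (p : ℝ × ℝ) =>
      (⟨fun t => A t (sig t p), A.continuous.clm_apply
        (sig_cont.comp (continuous_const.prodMk continuous_id))⟩ : C(unitInterval, F)))
    (by intros; ext; simp) (by intros; ext; simp) (by intros; ext; simp) (by intros; ext; simp)) 1
    (by
      intro A p
      rw [ContinuousMap.norm_le _ (by positivity)]
      intro t
      simp only [LinearMap.mk₂_apply, ContinuousMap.coe_mk, one_mul]
      exact ((A t).le_opNorm _).trans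
        (mul_le_mul (A.norm_coe_le_norm t) (sig_norm t p) (norm_nonneg _)
          ((norm_nonneg _).trans (A.norm_coe_le_norm t))))

lemma Lam_apply (A : C(unitInterval, ℝ × ℝ →L[ℝ] F)) (p : ℝ × ℝ) (t : unitInterval) :
    Lam A p t = A t (sig t p) := rfl

lemma Phi_hasFDeriv {S : Set (ℝ × ℝ)} (hS : ∀ t : unitInterval, ∀ p ∈ S, sig t p ∈ S)
    (hc : Convex ℝ S)
    {f : ℝ × ℝ → F} {f' : ℝ × ℝ → (ℝ × ℝ →L[ℝ] F)} (hf : ∀ p ∈ S, HasFDerivWithinAt f (f' p) S p)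
    (hf' : ContinuousOn f' S) {p : ℝ × ℝ} (hp : p ∈ S) :
    HasFDerivWithinAt (Phi f) (Lam (Phi f' p)) S p := by
  have hfc : ContinuousOn f S := fun q hq => (hf q hq).continuousWithinAt
  rw [hasFDerivWithinAt_iff_isLittleO, Asymptotics.isLittleO_iff]
  intro ε hε
  have h1 := Phi_continuousOn hS hf' p hp
  rw [Metric.continuousWithinAt_iff] at h1
  obtain ⟨δ, hδ, h1⟩ := h1 ε hε
  have h2 : S ∩ Metric.ball p δ ∈ nhdsWithin p S :=
    inter_mem self_mem_nhdsWithin (mem_nhdsWithin_of_mem_nhds (Metric.ball_mem_nhds p hδ))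
  filter_upwards [h2] with q hq
  rw [ContinuousMap.norm_le _ (by positivity)]
  intro t
  simp only [ContinuousMap.sub_apply, Lam_apply]
  rw [Phi_apply hS hfc hq.1, Phi_apply hS hfc hp, Phi_apply hS hf' hp]
  have key := Convex.norm_image_sub_le_of_norm_hasFDerivWithin_le' (𝕜 := ℝ)
    (f := fun r => f (sig t r)) (f' := fun r => (f' (sig t r)).comp (sig t))
    (φ := (f' (sig t p)).comp (sig t)) (s := S ∩ Metric.ball p δ) (x := p) (y := q) (C := ε)
    (fun r hr => by
      have := (hf (sig t r) (hS t r hr.1)).comp r ((sig t).hasFDerivWithinAt (s := S))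
        (fun r hr => hS t r hr)
      exact this.mono inter_subset_left)
    (fun r hr => by
      rw [← ContinuousLinearMap.sub_comp]
      apply ContinuousLinearMap.opNorm_le_bound _ hε.le
      intro v
      have h3 := h1 hr.1 hr.2
      rw [dist_eq_norm] at h3
      have h4 := ((Phi f' r - Phi f' p).norm_coe_le_norm t).trans h3.le
      rw [ContinuousMap.sub_apply, Phi_apply hS hf' hr.1, Phi_apply hS hf' hp] at h4
      rw [ContinuousLinearMap.comp_apply]
      exact (ContinuousLinearMap.le_opNorm _ _).trans
        (mul_le_mul h4 (sig_norm t v) (norm_nonneg _) hε.le))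
    (hc.inter (convex_ball p δ)) ⟨hp, Metric.mem_ball_self hδ⟩ hq
  exact key

lemma Phi_contDiffOn {S : Set (ℝ × ℝ)} (hS : ∀ t : unitInterval, ∀ p ∈ S, sig t p ∈ S)
    (hc : Convex ℝ S) (hu : UniqueDiffOn ℝ S) (n : ℕ) :
    ∀ {F : Type} [NormedAddCommGroup F] [NormedSpace ℝ F] {f : ℝ × ℝ → F},
      ContDiffOn ℝ n f S → ContDiffOn ℝ n (Phi f) S := by
  induction n with
  | zero =>
    intro F _ _ f hf
    have hf := hf.continuousOn
    simp only [Nat.cast_zero, contDiffOn_zero]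
    exact Phi_continuousOn hS hf
  | succ n ih =>
    intro F _ _ f hf
    have hf1 := hf.differentiableOn (by simp)
    have hf2 : ContDiffOn ℝ n (fderivWithin ℝ f S) S :=
      hf.fderivWithin hu (by norm_cast)
    have h3 : ∀ p ∈ S, HasFDerivWithinAt (Phi f) (Lam (Phi (fderivWithin ℝ f S) p)) S p :=
      fun p hp => Phi_hasFDeriv hS hc (fun q hq => (hf1 q hq).hasFDerivWithinAt)
        hf2.continuousOn hp
    push_cast
    rw [contDiffOn_succ_iff_fderivWithin hu]
    refine ⟨fun p hp => (h3 p hp).differentiableWithinAt, by simp, ?_⟩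
    refine ContDiffOn.congr (f := fun p => Lam (Phi (fderivWithin ℝ f S) p)) ?_
      (fun p hp => (h3 p hp).fderivWithin (hu p hp))
    have hL : ContDiff ℝ n (fun A : C(unitInterval, ℝ × ℝ →L[ℝ] F) => Lam A) :=
      ContinuousLinearMap.contDiff (𝕜 := ℝ) (E := C(unitInterval, ℝ × ℝ →L[ℝ] F))
        (F := ℝ × ℝ →L[ℝ] C(unitInterval, F)) (Lam (F := F))
    exact hL.comp_contDiffOn (ih hf2)

/-- the integral operator -/
noncomputable def pj (x : ℝ) : unitInterval := Set.projIcc 0 1 zero_le_one x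

lemma pj_cont : Continuous pj := continuous_projIcc (h := zero_le_one)

lemma pj_coe {x : ℝ} (h0 : 0 ≤ x) (h1 : x ≤ 1) : (pj x : ℝ) = x := by
  unfold pj; rw [Set.projIcc_of_mem _ ⟨h0, h1⟩]

lemma K_cont {k : ℝ → ℝ} (hk : Continuous k) (f : C(unitInterval, ℝ)) :
    Continuous fun τ : unitInterval => (τ : ℝ) ^ 2 * ∫ t in (0:ℝ)..1, k t * f (pj (t * τ)) := by
  apply Continuous.mul (by fun_prop)
  apply intervalIntegral.continuous_parametric_intervalIntegral_of_continuous'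
  have := pj_cont
  simp only [Function.uncurry_def]
  fun_prop

lemma K_int {k : ℝ → ℝ} (hk : Continuous k) (f : C(unitInterval, ℝ)) (τ : unitInterval) :
    IntervalIntegrable (fun t => k t * f (pj (t * τ))) volume 0 1 := by
  apply Continuous.intervalIntegrable
  have := pj_cont
  fun_prop

lemma K_bound {k : ℝ → ℝ} {C : ℝ} (hC : ∀ t ∈ Icc (0:ℝ) 1, |k t| ≤ C)
    {c : ℝ} (hc : 0 ≤ c) (m : ℕ) {f : C(unitInterval, ℝ)} (hf : ∀ τ, |f τ| ≤ c * (τ : ℝ) ^ m)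
    (τ : unitInterval) :
    |(τ : ℝ) ^ 2 * ∫ t in (0:ℝ)..1, k t * f (pj (t * τ))| ≤
      (C * c / (m + 1)) * (τ : ℝ) ^ (m + 2) := by
  have hC0 : 0 ≤ C := (abs_nonneg _).trans (hC 0 (by simp))
  have h1 : ‖∫ t in (0:ℝ)..1, k t * f (pj (t * τ))‖ ≤ ∫ t in (0:ℝ)..1, C * c * (τ:ℝ) ^ m * t ^ m := by
    apply intervalIntegral.norm_integral_le_of_norm_le zero_le_one
    · refine Eventually.of_forall fun t ht => ?_
      have h3 : ((pj (t * τ) : unitInterval) : ℝ) = t * τ :=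
        pj_coe (mul_nonneg ht.1.le τ.2.1) (mul_le_one₀ ht.2 τ.2.1 τ.2.2)
      have h4 := hf (pj (t * τ))
      rw [h3] at h4
      rw [norm_mul, Real.norm_eq_abs, Real.norm_eq_abs]
      calc _ ≤ C * (c * (t * τ) ^ m) :=
            mul_le_mul (hC t ⟨ht.1.le, ht.2⟩) h4 (abs_nonneg _) hC0
        _ = _ := by rw [mul_pow]; ring
    · exact (by fun_prop : Continuous _).intervalIntegrable _ _
  rw [intervalIntegral.integral_const_mul, integral_pow, Real.norm_eq_abs] at h1
  rw [abs_mul, abs_of_nonneg (sq_nonneg (τ:ℝ))]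
  calc _ ≤ (τ:ℝ)^2 * _ := mul_le_mul_of_nonneg_left h1 (sq_nonneg _)
    _ = _ := by simp; ring

noncomputable def K (k : ℝ → ℝ) (hk : Continuous k) (C : ℝ) (hC : ∀ t ∈ Icc (0:ℝ) 1, |k t| ≤ C) :
    C(unitInterval, ℝ) →L[ℝ] C(unitInterval, ℝ) :=
  LinearMap.mkContinuous
    { toFun := fun f => ⟨_, K_cont hk f⟩
      map_add' := by
        intro f g; ext τ
        simp only [ContinuousMap.coe_mk, ContinuousMap.add_apply, mul_add]
        rw [intervalIntegral.integral_add (K_int hk f τ) (K_int hk g τ), mul_add]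
      map_smul' := by
        intro c f; ext τ
        simp only [ContinuousMap.coe_mk, ContinuousMap.smul_apply, smul_eq_mul, RingHom.id_apply]
        simp only [mul_left_comm _ c]
        rw [intervalIntegral.integral_const_mul]; ring }
    C (by
      intro f
      have hC0 : 0 ≤ C := (abs_nonneg _).trans (hC 0 (by simp))
      rw [ContinuousMap.norm_le _ (by positivity)]
      intro τ
      have h := K_bound hC (norm_nonneg f) 0 (f := f)
        (fun τ => by simpa using f.norm_coe_le_norm τ) τ
      refine (h.trans ?_)
      simp only [CharP.cast_eq_zero, zero_add, div_one]
      exact mul_le_of_le_one_right (by positivity) (pow_le_one₀ τ.2.1 τ.2.2))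

lemma K_apply {k : ℝ → ℝ} {hk : Continuous k} {C : ℝ} {hC : ∀ t ∈ Icc (0:ℝ) 1, |k t| ≤ C}
    (f : C(unitInterval, ℝ)) (τ : unitInterval) :
    K k hk C hC f τ = (τ : ℝ) ^ 2 * ∫ t in (0:ℝ)..1, k t * f (pj (t * τ)) := rfl

noncomputable def T (k : ℝ → ℝ) (hk : Continuous k) (C : ℝ) (hC : ∀ t ∈ Icc (0:ℝ) 1, |k t| ≤ C)
    (a : ℝ) (β : C(unitInterval, ℝ)) : C(unitInterval, ℝ) →L[ℝ] C(unitInterval, ℝ) :=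
  a • (K k hk C hC).comp (ContinuousLinearMap.mul ℝ C(unitInterval, ℝ) β)

lemma T_apply {k : ℝ → ℝ} {hk : Continuous k} {C : ℝ} {hC : ∀ t ∈ Icc (0:ℝ) 1, |k t| ≤ C}
    (a : ℝ) (β f : C(unitInterval, ℝ)) (τ : unitInterval) :
    T k hk C hC a β f τ = a * K k hk C hC (β * f) τ := rfl

lemma T_pow {k : ℝ → ℝ} {hk : Continuous k} {C : ℝ} {hC : ∀ t ∈ Icc (0:ℝ) 1, |k t| ≤ C}
    (a : ℝ) (β f : C(unitInterval, ℝ)) (n : ℕ) (τ : unitInterval) :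
    |((T k hk C hC a β) ^ n) f τ| ≤ ((|a| * C * ‖β‖) ^ n / n.factorial * ‖f‖) * (τ : ℝ) ^ n := by
  have hC0 : 0 ≤ C := (abs_nonneg _).trans (hC 0 (by simp))
  induction n generalizing τ with
  | zero => simpa using f.norm_coe_le_norm τ
  | succ n ih =>
    rw [pow_succ', mul_apply_eq_comp, T_apply, abs_mul, K_apply]
    have h := K_bound hC (c := ‖β‖ * ((|a| * C * ‖β‖) ^ n / n.factorial * ‖f‖)) (by positivity) n
      (f := β * ((T k hk C hC a β) ^ n) f) (fun τ => by
        rw [ContinuousMap.mul_apply, abs_mul, mul_assoc]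
        exact mul_le_mul (β.norm_coe_le_norm τ) (ih τ) (abs_nonneg _) (norm_nonneg _)) τ
    refine (mul_le_mul_of_nonneg_left h (abs_nonneg a)).trans ?_
    rw [← mul_assoc]
    have e : |a| * (C * (‖β‖ * ((|a| * C * ‖β‖) ^ n / n.factorial * ‖f‖)) / (n + 1)) =
      (|a| * C * ‖β‖) ^ (n+1) / (n+1).factorial * ‖f‖ := by
      rw [Nat.factorial_succ]; push_cast; field_simp; ring
    rw [e]
    apply mul_le_mul_of_nonneg_left _ (by positivity)
    exact pow_le_pow_of_le_one τ.2.1 τ.2.2 (by omega)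

lemma T_unit {k : ℝ → ℝ} {hk : Continuous k} {C : ℝ} {hC : ∀ t ∈ Icc (0:ℝ) 1, |k t| ≤ C}
    (a : ℝ) (β : C(unitInterval, ℝ)) : IsUnit (1 - T k hk C hC a β) := by
  have hC0 : 0 ≤ C := (abs_nonneg _).trans (hC 0 (by simp))
  obtain ⟨n, hn⟩ := ((FloorSemiring.tendsto_pow_div_factorial_atTop (|a| * C * ‖β‖)).eventually
    (gt_mem_nhds zero_lt_one)).exists
  have h1 : ‖(T k hk C hC a β) ^ n‖ < 1 := by
    refine lt_of_le_of_lt ?_ hn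
    apply ContinuousLinearMap.opNorm_le_bound _ (by positivity)
    intro f
    rw [ContinuousMap.norm_le _ (by positivity)]
    intro τ
    refine (T_pow a β f n τ).trans ?_
    exact mul_le_of_le_one_right (by positivity) (pow_le_one₀ τ.2.1 τ.2.2)
  have h2 : IsUnit (1 - (T k hk C hC a β) ^ n) := (Units.oneSub ((T k hk C hC a β) ^ n) h1).isUnit
  have hcomm : Commute (1 - T k hk C hC a β) (∑ i ∈ Finset.range n, (T k hk C hC a β) ^ i) := by
    apply Commute.sum_right
    intro i _
    exact (Commute.one_left _).sub_left ((Commute.refl _).pow_right i)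
  rw [← mul_neg_geom_sum, hcomm.isUnit_mul_iff] at h2
  exact h2.1


noncomputable def kk (ν t : ℝ) : ℝ := (t - t ^ (1 + 2 * ν)) / (2 * ν)

lemma G_deriv {g : ℝ → ℝ} {R : ℝ} (hg : ContinuousOn g (Ico 0 R)) {x : ℝ} (hx : x ∈ Ioo 0 R) :
    HasDerivAt (fun y => ∫ s in (0:ℝ)..y, g s) (g x) x := by
  apply intervalIntegral.integral_hasDerivAt_right
  · apply ContinuousOn.intervalIntegrable
    rw [uIcc_of_le hx.1.le]
    exact hg.mono (fun y hy => ⟨hy.1, hy.2.trans_lt hx.2⟩)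
  · exact (hg.mono Ioo_subset_Ico_self).stronglyMeasurableAtFilter isOpen_Ioo x hx
  · exact hg.continuousAt (Ico_mem_nhds hx.1 hx.2)

lemma w_form {ν : ℝ} (hν : 0 < ν) {g : ℝ → ℝ} {R : ℝ} (hg : ContinuousOn g (Ico 0 R)) {y : ℝ}
    (hy : y ∈ Ioo 0 R) :
    y ^ 2 * ∫ t in (0:ℝ)..1, kk ν t * g (t * y) =
      1 / (2 * ν) * ((∫ s in (0:ℝ)..y, s * g s) -
        y ^ (-(2 * ν)) * ∫ s in (0:ℝ)..y, s ^ (1 + 2 * ν) * g s) := by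
  have hy0 : y ≠ 0 := hy.1.ne'
  have h1 := intervalIntegral.smul_integral_comp_mul_right (a := 0) (b := 1)
    (fun s => y * kk ν (s / y) * g s) y
  simp only [zero_mul, one_mul, mul_div_cancel_right₀ _ hy0, smul_eq_mul, mul_assoc] at h1
  rw [intervalIntegral.integral_const_mul, ← mul_assoc, ← sq] at h1
  rw [h1]
  have hsub : Icc 0 y ⊆ Ico 0 R := fun s hs => ⟨hs.1, hs.2.trans_lt hy.2⟩
  have i1 : IntervalIntegrable (fun s => s * g s) volume 0 y := by
    apply ContinuousOn.intervalIntegrable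
    rw [uIcc_of_le hy.1.le]
    exact continuousOn_id.mul (hg.mono hsub)
  have i2 : IntervalIntegrable (fun s => s ^ (1 + 2 * ν) * g s) volume 0 y := by
    apply ContinuousOn.intervalIntegrable
    rw [uIcc_of_le hy.1.le]
    exact (Real.continuous_rpow_const (by positivity)).continuousOn.mul (hg.mono hsub)
  rw [← intervalIntegral.integral_const_mul (y ^ (-(2 * ν))),
    ← intervalIntegral.integral_sub i1 (i2.const_mul _), ← intervalIntegral.integral_const_mul]
  apply intervalIntegral.integral_congr
  intro s hs
  rw [uIcc_of_le hy.1.le] at hs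
  simp only [kk]
  rw [Real.div_rpow hs.1 hy.1.le, Real.rpow_neg hy.1.le, Real.rpow_add hy.1, Real.rpow_one]
  have := (Real.rpow_pos_of_pos hy.1 (2 * ν)).ne'
  field_simp

lemma ode {ν : ℝ} (hν : 0 < ν) {g w : ℝ → ℝ} {R : ℝ} (hg : ContinuousOn g (Ico 0 R))
    (hw : ∀ y ∈ Ioo 0 R, w y = 1 + y ^ 2 * ∫ t in (0:ℝ)..1, kk ν t * g (t * y))
    {x : ℝ} (hx : x ∈ Ioo 0 R) :
    deriv (deriv (fun t : ℝ => t ^ ((1:ℝ)/2 + ν) * w t)) x =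
      (ν ^ 2 - 1/4) * (x ^ 2)⁻¹ * (x ^ ((1:ℝ)/2 + ν) * w x) + x ^ ((1:ℝ)/2 + ν) * g x := by
  set G1 : ℝ → ℝ := fun y => ∫ s in (0:ℝ)..y, s * g s with hG1
  set G2 : ℝ → ℝ := fun y => ∫ s in (0:ℝ)..y, s ^ (1 + 2 * ν) * g s with hG2
  have d1 : ∀ y ∈ Ioo 0 R, HasDerivAt G1 (y * g y) y := fun y hy =>
    G_deriv (g := fun s => s * g s) (continuousOn_id.mul hg) hy
  have d2 : ∀ y ∈ Ioo 0 R, HasDerivAt G2 (y ^ (1 + 2 * ν) * g y) y := fun y hy =>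
    G_deriv (g := fun s => s ^ (1 + 2 * ν) * g s)
      ((Real.continuous_rpow_const (by positivity)).continuousOn.mul hg) hy
  have pw : ∀ y ∈ Ioo 0 R, ∀ p : ℝ, HasDerivAt (fun t : ℝ => t ^ p) (p * y ^ (p - 1)) y :=
    fun y hy p => Real.hasDerivAt_rpow_const (Or.inl hy.1.ne')
  have e1 : ∀ y ∈ Ioo 0 R, y ^ ((1:ℝ)/2 - ν) * y ^ (1 + 2 * ν) = y * y ^ ((1:ℝ)/2 + ν) := by
    intro y hy
    rw [← Real.rpow_add hy.1]
    nth_rewrite 2 [← Real.rpow_one y]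
    rw [← Real.rpow_add hy.1]
    congr 1; ring
  have e2 : ∀ y ∈ Ioo 0 R, y ^ ((1:ℝ)/2 + ν) * y ^ (-(2 * ν)) = y ^ ((1:ℝ)/2 - ν) := by
    intro y hy
    rw [← Real.rpow_add hy.1]
    congr 1; ring
  have hu : ∀ y ∈ Ioo 0 R, y ^ ((1:ℝ)/2 + ν) * w y = y ^ ((1:ℝ)/2 + ν) +
      1 / (2 * ν) * (y ^ ((1:ℝ)/2 + ν) * G1 y - y ^ ((1:ℝ)/2 - ν) * G2 y) := by
    intro y hy
    rw [hw y hy, w_form hν hg hy, ← e2 y hy]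
    ring
  have hn : ∀ y ∈ Ioo 0 R, Ioo 0 R ∈ nhds y := fun y hy => isOpen_Ioo.mem_nhds hy
  have hu1 : ∀ y ∈ Ioo 0 R, HasDerivAt (fun t : ℝ => t ^ ((1:ℝ)/2 + ν) * w t)
      ((1/2 + ν) * y ^ ((1:ℝ)/2 + ν - 1) + 1 / (2 * ν) * ((1/2 + ν) * y ^ ((1:ℝ)/2 + ν - 1) * G1 y
        - (1/2 - ν) * y ^ ((1:ℝ)/2 - ν - 1) * G2 y)) y := by
    intro y hy
    have := (pw y hy (1/2 + ν)).add ((((pw y hy (1/2 + ν)).mul (d1 y hy)).sub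
      ((pw y hy (1/2 - ν)).mul (d2 y hy))).const_mul (1 / (2 * ν)))
    refine (this.congr_of_eventuallyEq ?_).congr_deriv ?_
    · filter_upwards [hn y hy] with t ht using hu t ht
    · linear_combination (-(1 / (2 * ν)) * g y) * e1 y hy
  have hu2 : HasDerivAt (deriv (fun t : ℝ => t ^ ((1:ℝ)/2 + ν) * w t))
      ((ν ^ 2 - 1/4) * (x ^ 2)⁻¹ * (x ^ ((1:ℝ)/2 + ν) * w x) + x ^ ((1:ℝ)/2 + ν) * g x) x := by
    have := ((pw x hx (1/2 + ν - 1)).const_mul (1/2 + ν)).add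
      (((((pw x hx (1/2 + ν - 1)).const_mul (1/2 + ν)).mul (d1 x hx)).sub
      (((pw x hx (1/2 - ν - 1)).const_mul (1/2 - ν)).mul (d2 x hx))).const_mul (1 / (2 * ν)))
    refine (this.congr_of_eventuallyEq ?_).congr_deriv ?_
    · filter_upwards [hn x hx] with t ht using (hu1 t ht).deriv
    · rw [hu x hx]
      have e := e1 x hx
      have hx0 := hx.1.ne'
      simp only [Real.rpow_sub_one hx0]
      generalize x ^ ((1:ℝ)/2 + ν) = P at *
      generalize x ^ ((1:ℝ)/2 - ν) = Q at *
      generalize x ^ (1 + 2 * ν) = M at *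
      field_simp
      linear_combination (-8 * g x * (1 - 2 * ν) * x) * e
  exact hu2.deriv

section Main
variable {k : ℝ → ℝ} {hk : Continuous k} {C : ℝ} {hC : ∀ t ∈ Icc (0:ℝ) 1, |k t| ≤ C}

/-- the rescaled solution -/
noncomputable def W (k : ℝ → ℝ) (hk : Continuous k) (C : ℝ) (hC : ∀ t ∈ Icc (0:ℝ) 1, |k t| ≤ C)
    (b : ℝ × ℝ → ℝ) (p : ℝ × ℝ) : C(unitInterval, ℝ) :=
  Ring.inverse (1 - T k hk C hC (p.1 ^ 2) (Phi b p)) 1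

lemma W_eq (b : ℝ × ℝ → ℝ) (p : ℝ × ℝ) :
    W k hk C hC b p = 1 + T k hk C hC (p.1 ^ 2) (Phi b p) (W k hk C hC b p) := by
  have h := Ring.mul_inverse_cancel _ (T_unit (hk := hk) (hC := hC) (p.1 ^ 2) (Phi b p))
  have h2 := congrArg (fun A : C(unitInterval, ℝ) →L[ℝ] C(unitInterval, ℝ) => A 1) h
  simp only [mul_apply_eq_comp, sub_apply,
    one_apply_eq_self] at h2
  exact sub_eq_iff_eq_add.1 h2

lemma W_unique (b : ℝ × ℝ → ℝ) (p : ℝ × ℝ) (V : C(unitInterval, ℝ))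
    (hV : V = 1 + T k hk C hC (p.1 ^ 2) (Phi b p) V) : V = W k hk C hC b p := by
  have h := Ring.inverse_mul_cancel _ (T_unit (hk := hk) (hC := hC) (p.1 ^ 2) (Phi b p))
  have h2 := congrArg (fun A : C(unitInterval, ℝ) →L[ℝ] C(unitInterval, ℝ) => A V) h
  simp only [mul_apply_eq_comp, sub_apply,
    one_apply_eq_self] at h2
  rw [sub_eq_iff_eq_add.2 hV] at h2
  exact h2.symm

lemma W_scale {S : Set (ℝ × ℝ)} (hS : ∀ t : unitInterval, ∀ p ∈ S, sig t p ∈ S)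
    {b : ℝ × ℝ → ℝ} (hb : ContinuousOn b S) {p : ℝ × ℝ} (hp : p ∈ S) (s : unitInterval) :
    W k hk C hC b p s = W k hk C hC b (sig s p) 1 := by
  let V : C(unitInterval, ℝ) :=
    ⟨fun τ => W k hk C hC b p (s * τ), by fun_prop⟩
  have hV : V = W k hk C hC b (sig s p) := by
    apply W_unique
    ext τ
    have h1 := congrArg (fun f : C(unitInterval, ℝ) => f (s * τ)) (W_eq (hk := hk) (hC := hC) b p)
    simp only [ContinuousMap.add_apply, T_apply, K_apply] at h1 ⊢
    refine h1.trans ?_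
    congr 1
    rw [sig_apply]
    have : (∫ t in (0:ℝ)..1, k t * (Phi b p * W k hk C hC b p) (pj (t * ((s * τ : unitInterval) : ℝ))))
      = ∫ t in (0:ℝ)..1, k t * (Phi b (sig s p) * V) (pj (t * τ)) := by
      apply intervalIntegral.integral_congr
      intro t ht
      rw [uIcc_of_le zero_le_one] at ht
      have e : pj (t * ((s * τ : unitInterval) : ℝ)) = s * pj (t * τ) := by
        ext
        push_cast
        rw [pj_coe (mul_nonneg ht.1 (mul_nonneg s.2.1 τ.2.1))
          (mul_le_one₀ ht.2 (mul_nonneg s.2.1 τ.2.1) (mul_le_one₀ s.2.2 τ.2.1 τ.2.2)),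
          pj_coe (mul_nonneg ht.1 τ.2.1) (mul_le_one₀ ht.2 τ.2.1 τ.2.2)]
        ring
      simp only [ContinuousMap.mul_apply]
      rw [e, Phi_apply hS hb hp, Phi_apply hS hb (hS s p hp)]
      congr 2
      simp only [sig_apply]
      congr 2
      push_cast; ring
    rw [this]
    push_cast
    rw [sig_apply]
    ring
  rw [← hV]
  simp [V]

lemma W_contDiffOn {S : Set (ℝ × ℝ)} (hS : ∀ t : unitInterval, ∀ p ∈ S, sig t p ∈ S)
    (hc : Convex ℝ S) (hu : UniqueDiffOn ℝ S) (n : ℕ) {b : ℝ × ℝ → ℝ} (hb : ContDiffOn ℝ n b S) :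
    ContDiffOn ℝ n (W k hk C hC b) S := by
  have h1 := Phi_contDiffOn hS hc hu n hb
  have hM : ContDiff ℝ n (fun f : C(unitInterval, ℝ) =>
      ContinuousLinearMap.mul ℝ C(unitInterval, ℝ) f) :=
    ContinuousLinearMap.contDiff (𝕜 := ℝ) (E := C(unitInterval, ℝ))
      (F := C(unitInterval, ℝ) →L[ℝ] C(unitInterval, ℝ))
      (ContinuousLinearMap.mul ℝ C(unitInterval, ℝ))
  have h1' : ContDiffOn ℝ n (fun p : ℝ × ℝ => p.1 ^ 2 • Phi b p) S :=
    ContDiffOn.smul (contDiff_fst.pow 2).contDiffOn h1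
  have h3 : ContDiffOn ℝ n (fun p : ℝ × ℝ => T k hk C hC (p.1 ^ 2) (Phi b p)) S := by
    have h2 : ContDiffOn ℝ n (fun p : ℝ × ℝ => (K k hk C hC).comp
        (ContinuousLinearMap.mul ℝ C(unitInterval, ℝ) (p.1 ^ 2 • Phi b p))) S :=
      ContDiffOn.clm_comp (𝕜 := ℝ) (E := C(unitInterval, ℝ)) (F := C(unitInterval, ℝ))
        (G := C(unitInterval, ℝ)) contDiffOn_const (hM.comp_contDiffOn h1')
    refine h2.congr (fun p _ => ?_)
    rw [map_smul, ContinuousLinearMap.comp_smul]; rfl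
  have h4 : ContDiffOn ℝ n (fun p : ℝ × ℝ =>
      Ring.inverse (1 - T k hk C hC (p.1 ^ 2) (Phi b p))) S := by
    intro p hp
    obtain ⟨v, hv⟩ := T_unit (hk := hk) (hC := hC) (p.1 ^ 2) (Phi b p)
    have h5 := contDiffAt_ringInverse (n := (n : WithTop ℕ∞)) ℝ
      (R := C(unitInterval, ℝ) →L[ℝ] C(unitInterval, ℝ)) v
    rw [hv] at h5
    exact h5.comp_contDiffWithinAt p ((contDiffOn_const.sub h3) p hp)
  exact h4.clm_apply contDiffOn_const

end Main

lemma eval_contDiff (n : ℕ) (s : unitInterval) :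
    ContDiff ℝ n (fun f : C(unitInterval, ℝ) => f s) :=
  ContinuousLinearMap.contDiff (𝕜 := ℝ) (E := C(unitInterval, ℝ)) (F := ℝ)
    (ContinuousMap.evalCLM ℝ s)

end Frob

open Frob
theorem frobenius_existence_with_parameter
    (ν h : ℝ) (hν : 0 < ν) (hh : 0 < h)
    -- I = [0, L) with 0 < L ≤ ∞
    (I : Set ℝ) (hI : (∃ L : ℝ, 0 < L ∧ I = Set.Ico 0 L) ∨ I = Set.Ici 0)
    -- Z is a connected open interval
    (Z : Set ℝ) (hZopen : IsOpen Z) (hZconn : IsPreconnected Z)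
    (B : ℝ → ℝ → ℝ)
    (hB : ∀ n : ℕ, ContDiffOn ℝ n (fun p : ℝ × ℝ => B p.1 p.2) (I ×ˢ Z)) :
    ∃ w : ℝ → ℝ → ℝ,
      (∀ n : ℕ, ContDiffOn ℝ n (fun p : ℝ × ℝ => w p.1 p.2) (I ×ˢ Z)) ∧
      ∀ z ∈ Z, w 0 z = 1 ∧ derivWithin (fun x : ℝ => w x z) (Set.Ici 0) 0 = 0 ∧
        ∀ x ∈ I, 0 < x →
          -(h ^ 2) * deriv (deriv (fun t : ℝ => t ^ ((1:ℝ)/2 + ν) * w t z)) x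
            + h ^ 2 * (ν ^ 2 - 1/4) * (x ^ 2)⁻¹ * (x ^ ((1:ℝ)/2 + ν) * w x z)
            + B x z * (x ^ ((1:ℝ)/2 + ν) * w x z) = 0 := by
  have hk : Continuous (kk ν) := by
    unfold kk
    exact (continuous_id.sub (Real.continuous_rpow_const (by positivity))).div_const _
  obtain ⟨C, hC⟩ : ∃ C, ∀ t ∈ Icc (0:ℝ) 1, |kk ν t| ≤ C := by
    obtain ⟨C, hC⟩ := isCompact_Icc.exists_bound_of_continuousOn (hk.continuousOn (s := Icc (0:ℝ) 1))
    exact ⟨C, hC⟩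
  have hIu : UniqueDiffOn ℝ I := by
    rcases hI with ⟨L, hL, rfl⟩ | rfl
    · exact uniqueDiffOn_Ico 0 L
    · exact uniqueDiffOn_Ici 0
  have hIc : Convex ℝ I := by
    rcases hI with ⟨L, hL, rfl⟩ | rfl
    · exact convex_Ico 0 L
    · exact convex_Ici 0
  have hI0 : (0:ℝ) ∈ I := by
    rcases hI with ⟨L, hL, rfl⟩ | rfl
    · exact ⟨le_rfl, hL⟩
    · exact self_mem_Ici
  have hInn : I ∈ nhdsWithin (0:ℝ) (Ici 0) := by
    rcases hI with ⟨L, hL, rfl⟩ | rfl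
    · exact Ico_mem_nhdsGE hL
    · exact self_mem_nhdsWithin
  have hIR : ∀ x ∈ I, ∃ R, x < R ∧ Ico 0 R ⊆ I := by
    rcases hI with ⟨L, hL, rfl⟩ | rfl
    · exact fun x hx => ⟨L, hx.2, subset_rfl⟩
    · exact fun x hx => ⟨x + 1, by linarith, Ico_subset_Ici_self⟩
  have hZc : Convex ℝ Z := hZconn.ordConnected.convex
  set S : Set (ℝ × ℝ) := I ×ˢ Z with hSdef
  have hc : Convex ℝ S := hIc.prod hZc
  have hu : UniqueDiffOn ℝ S := hIu.prod hZopen.uniqueDiffOn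
  have hS : ∀ t : unitInterval, ∀ p ∈ S, sig t p ∈ S := by
    intro t p hp
    rw [sig_apply]
    exact ⟨hIc.smul_mem_of_zero_mem hI0 hp.1 t.2, hp.2⟩
  let b : ℝ × ℝ → ℝ := fun p => B p.1 p.2 / h ^ 2
  have hb : ∀ n : ℕ, ContDiffOn ℝ n b S := fun n => (hB n).div_const _
  have hbc : ContinuousOn b S := (hb 0).continuousOn
  let w : ℝ → ℝ → ℝ := fun x z => W (kk ν) hk C hC b (x, z) 1
  have hW : ∀ n : ℕ, ContDiffOn ℝ n (W (kk ν) hk C hC b) S := fun n =>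
    W_contDiffOn hS hc hu n (hb n)
  have hw : ∀ n : ℕ, ContDiffOn ℝ n (fun p : ℝ × ℝ => w p.1 p.2) S := fun n =>
    (eval_contDiff n 1).comp_contDiffOn (hW n)
  let r : ℝ × ℝ → ℝ := fun p => K (kk ν) hk C hC (Phi b p * W (kk ν) hk C hC b p) 1
  have hwr : ∀ x z, w x z = 1 + x ^ 2 * r (x, z) := by
    intro x z
    have := congrArg (fun f : C(unitInterval, ℝ) => f 1) (W_eq (hk := hk) (hC := hC) b (x, z))
    simpa only [ContinuousMap.add_apply, T_apply, ContinuousMap.one_apply] using this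
  have hr : ContDiffOn ℝ (1 : ℕ) r S := by
    apply (eval_contDiff 1 1).comp_contDiffOn
    apply (ContinuousLinearMap.contDiff (𝕜 := ℝ) (E := C(unitInterval, ℝ))
      (F := C(unitInterval, ℝ)) (K (kk ν) hk C hC)).comp_contDiffOn
    exact (Phi_contDiffOn hS hc hu 1 (hb 1)).mul (hW 1)
  have hwint : ∀ x z, (x, z) ∈ S → w x z = 1 + x ^ 2 *
      ∫ t in (0:ℝ)..1, kk ν t * (fun y => b (y, z) * w y z) (t * x) := by
    intro x z hp
    rw [hwr]
    congr 2
    simp only [r, K_apply]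
    simp only [Set.Icc.coe_one, one_pow, one_mul, mul_one]
    apply intervalIntegral.integral_congr
    intro t ht
    rw [uIcc_of_le zero_le_one] at ht
    simp only [ContinuousMap.mul_apply]
    rw [Phi_apply hS hbc hp, W_scale hS hbc hp, sig_apply, pj_coe ht.1 ht.2]
  refine ⟨w, hw, fun z hz => ⟨by rw [hwr]; ring, ?_, ?_⟩⟩
  · have hd : DifferentiableWithinAt ℝ (fun x : ℝ => r (x, z)) I 0 := by
      have h1 := hr.differentiableOn (by simp) (0, z) ⟨hI0, hz⟩
      exact h1.comp (0:ℝ) (f := fun x : ℝ => (x, z)) (by fun_prop) (fun x hx => ⟨hx, hz⟩)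
    have hd2 := (hd.mono_of_mem_nhdsWithin hInn).hasDerivWithinAt
    have h3 := (((hasDerivWithinAt_id (0:ℝ) (Ici 0)).pow 2).mul hd2).const_add 1
    have h4 : HasDerivWithinAt (fun x : ℝ => w x z) 0 (Ici 0) 0 := by
      refine (h3.congr_deriv (by simp)).congr (fun x _ => ?_) ?_
      · rw [hwr]; rfl
      · rw [hwr]; rfl
    exact h4.derivWithin (uniqueDiffOn_Ici 0 0 self_mem_Ici)
  · intro x hx hx0
    obtain ⟨R, hxR, hR⟩ := hIR x hx
    have hg : ContinuousOn (fun y => b (y, z) * w y z) (Ico 0 R) := by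
      have h1 : ContinuousOn (fun p : ℝ × ℝ => b p * w p.1 p.2) S :=
        hbc.mul (hw 0).continuousOn
      exact h1.comp (f := fun y : ℝ => (y, z)) (by fun_prop) (fun y hy => ⟨hR hy, hz⟩)
    have h1 := ode hν hg (fun y hy => hwint y z ⟨hR ⟨hy.1.le, hy.2⟩, hz⟩) ⟨hx0, hxR⟩
    rw [h1]
    simp only [b]
    field_simp
    ring
end
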